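/- arXiv:2512.08364 — 5 statements merged into one kernel-verified Lean document; each statement's English description precedes it below -/
import Mathlib

section
/- Let d, N ∈ ℕ and let ρ_d be a probability density on [0,1]^d (measurable, nonnegative, ∫_{[0,1]^d} ρ_d = 1, ρ_d > 0 almost everywhere) such that C := ∫_{[0,1]^d} (∏_{j=1}^d (1−t_j))/ρ_d(t) dt < ∞. If t_1,…,t_N are i.i.d. random points in [0,1]^d with law ρ_d(t)dt and the weights are a_k = 1/(N ρ_d(t_k)), then E[∫_{[0,1]^d} Δ(x)² dx] = (C − 3^{−d})/N. -/
open MeasureTheory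

/-!
For a fixed `x`, the weighted count `∑ k, a_k 1_{[0,x)}(t_k)` is the mean of `N` i.i.d. copies of
`1_{[0,x)}(t) / ρ(t)`, whose expectation is `x_1 ⋯ x_d`; hence its mean square error is the variance
of one copy divided by `N`. Integrating in `x` and exchanging integrals, the second moments
contribute `C` because `∫ 1_{[0,x)}(t) dx = ∏ (1 - t_j)`, and the squared expectations contribute
`∫ ∏ x_j² dx = 3^{-d}`.
-/

open ProbabilityTheory Function

section SquareIntegrableKernel

variable {Ω X : Type*} [MeasurableSpace Ω] [MeasurableSpace X] {P : Measure Ω} {ν : Measure X}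
  [SFinite ν] {f : Ω → X → ℝ}

theorem ae_memLp_two_of_memLp_two_prod [SFinite P] (hf : MemLp (uncurry f) 2 (P.prod ν)) :
    ∀ᵐ x ∂ν, MemLp (f · x) 2 P := by
  filter_upwards [hf.aestronglyMeasurable.prodMk_right, hf.integrable_sq.prod_left_ae]
    with x hmeas hsq
  exact (memLp_two_iff_integrable_sq hmeas).2 hsq

variable [IsProbabilityMeasure P]

theorem sq_integral_le_integral_sq {g : Ω → ℝ} (hg : MemLp g 2 P) :
    (∫ t, g t ∂P) ^ 2 ≤ ∫ t, g t ^ 2 ∂P :=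
  sub_nonneg.1 <| (variance_nonneg g P).trans_eq (variance_eq_sub hg)

theorem memLp_two_integral_left (hf : MemLp (uncurry f) 2 (P.prod ν)) :
    MemLp (fun x ↦ ∫ t, f t x ∂P) 2 ν := by
  have hmeas : AEStronglyMeasurable (fun x ↦ ∫ t, f t x ∂P) ν :=
    hf.aestronglyMeasurable.prod_swap.integral_prod_right'
  rw [memLp_two_iff_integrable_sq hmeas]
  refine hf.integrable_sq.integral_prod_right.mono' (hmeas.pow 2) ?_
  filter_upwards [ae_memLp_two_of_memLp_two_prod hf] with x hx
  rw [Real.norm_of_nonneg (sq_nonneg _)]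
  exact sq_integral_le_integral_sq hx

theorem integral_variance (hf : MemLp (uncurry f) 2 (P.prod ν)) :
    ∫ x, Var[(f · x); P] ∂ν = ∫ t, ∫ x, f t x ^ 2 ∂ν ∂P - ∫ x, (∫ t, f t x ∂P) ^ 2 ∂ν := by
  have integrable_second_moment : Integrable (fun x ↦ ∫ t, f t x ^ 2 ∂P) ν :=
    hf.integrable_sq.integral_prod_right
  rw [integral_integral_swap hf.integrable_sq,
    ← integral_sub integrable_second_moment (memLp_two_integral_left hf).integrable_sq]
  refine integral_congr_ae ?_
  filter_upwards [ae_memLp_two_of_memLp_two_prod hf] with x hx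
  exact variance_eq_sub hx

end SquareIntegrableKernel

section MonteCarlo

variable {ι Ω X : Type*} [Fintype ι]

/-- The sample mean of `f` over the points `T`: the equal-weight Monte Carlo estimator. It takes
the junk value `0` when `ι` is empty. -/
noncomputable def sampleMean (f : Ω → ℝ) (T : ι → Ω) : ℝ :=
  (∑ k, f (T k)) / Fintype.card ι

theorem sum_one_div_mul_eq_sampleMean_div (g ρ : Ω → ℝ) (T : ι → Ω) :
    ∑ k, 1 / (Fintype.card ι * ρ (T k)) * g (T k) = sampleMean (fun t ↦ g t / ρ t) T := by
  rw [sampleMean, Finset.sum_div]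
  exact Finset.sum_congr rfl fun k _ ↦ by ring

variable [MeasurableSpace Ω] [MeasurableSpace X] {P : Measure Ω} [IsProbabilityMeasure P]
  {ν : Measure X}

theorem memLp_sampleMean {f : Ω → ℝ} {p : ENNReal} (hf : MemLp f p P) :
    MemLp (sampleMean (ι := ι) f) p (Measure.pi fun _ ↦ P) := by
  change MemLp (fun T : ι → Ω ↦ (∑ k, f (T k)) / Fintype.card ι) p _
  simp only [div_eq_mul_inv]
  exact (memLp_finsetSum _ fun k _ ↦
    hf.comp_measurePreserving (measurePreserving_eval (fun _ ↦ P) k)).mul_const _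

theorem integral_sampleMean [Nonempty ι] {f : Ω → ℝ} (hf : Integrable f P) :
    ∫ T : ι → Ω, sampleMean f T ∂(Measure.pi fun _ ↦ P) = ∫ t, f t ∂P := by
  simp only [sampleMean]
  rw [integral_div, integral_finsetSum _ fun k _ ↦ integrable_comp_eval hf]
  simp [integral_comp_eval (μ := fun _ : ι ↦ P) hf.aestronglyMeasurable]

theorem variance_sampleMean {f : Ω → ℝ} (hf : MemLp f 2 P) :
    Var[sampleMean (ι := ι) f; Measure.pi fun _ ↦ P] = Var[f; P] / Fintype.card ι := by
  have variance_sum : Var[fun T : ι → Ω ↦ ∑ k, f (T k); Measure.pi fun _ ↦ P]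
      = Fintype.card ι * Var[f; P] := by
    simpa [Finset.sum_fn] using
      variance_sum_pi (μ := fun _ : ι ↦ P) (X := fun _ ↦ f) fun _ ↦ hf
  change Var[fun T : ι → Ω ↦ (∑ k, f (T k)) / Fintype.card ι; _] = _
  simp only [div_eq_mul_inv, variance_mul_const, variance_sum]
  by_cases h : (Fintype.card ι : ℝ) = 0
  · simp [h]
  · field_simp

theorem integral_sq_sampleMean_sub_integral [Nonempty ι] {f : Ω → ℝ} (hf : MemLp f 2 P) :
    ∫ T : ι → Ω, (sampleMean f T - ∫ t, f t ∂P) ^ 2 ∂(Measure.pi fun _ ↦ P)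
      = Var[f; P] / Fintype.card ι := by
  rw [← variance_sampleMean hf,
    variance_eq_integral (memLp_sampleMean hf).aestronglyMeasurable.aemeasurable,
    integral_sampleMean (hf.integrable one_le_two)]

variable [SFinite ν] {f : Ω → X → ℝ}

theorem memLp_two_sampleMean_sub_integral (hf : MemLp (uncurry f) 2 (P.prod ν)) :
    MemLp (fun p : (ι → Ω) × X ↦ sampleMean (f · p.2) p.1 - ∫ t, f t p.2 ∂P) 2
      ((Measure.pi fun _ ↦ P).prod ν) := by
  have memLp_term (k : ι) : MemLp (fun p : (ι → Ω) × X ↦ f (p.1 k) p.2) 2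
      ((Measure.pi fun _ ↦ P).prod ν) :=
    hf.comp_measurePreserving
      ((measurePreserving_eval (fun _ ↦ P) k).prod (MeasurePreserving.id ν))
  simp only [sampleMean, div_eq_mul_inv]
  exact ((memLp_finsetSum _ fun k _ ↦ memLp_term k).mul_const _).sub
    ((memLp_two_integral_left hf).comp_snd _)

theorem integral_integral_sq_sampleMean_sub_integral [Nonempty ι]
    (hf : MemLp (uncurry f) 2 (P.prod ν)) :
    ∫ T : ι → Ω, ∫ x, (sampleMean (f · x) T - ∫ t, f t x ∂P) ^ 2 ∂ν ∂(Measure.pi fun _ ↦ P)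
      = (∫ t, ∫ x, f t x ^ 2 ∂ν ∂P - ∫ x, (∫ t, f t x ∂P) ^ 2 ∂ν) / Fintype.card ι := by
  rw [integral_integral_swap (memLp_two_sampleMean_sub_integral hf).integrable_sq,
    ← integral_variance hf, ← integral_div]
  refine integral_congr_ae ?_
  filter_upwards [ae_memLp_two_of_memLp_two_prod hf] with x hx
  exact integral_sq_sampleMean_sub_integral hx

end MonteCarlo

section ProductDensity

variable {ι : Type*} [Fintype ι] {E : ι → Type*} [∀ i, MeasurableSpace (E i)]
  {μ : ∀ i, Measure (E i)} [∀ i, SigmaFinite (μ i)] {ρ : ∀ i, E i → ℝ}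

theorem ae_nonneg_prod_comp_eval (hnonneg : ∀ i, 0 ≤ᵐ[μ i] ρ i) :
    0 ≤ᵐ[Measure.pi μ] fun T ↦ ∏ i, ρ i (T i) := by
  filter_upwards [Measure.ae_le_pi hnonneg] with T hT
  exact Finset.prod_nonneg fun i _ ↦ hT i

theorem pi_withDensity_ofReal (hρ : ∀ i, Integrable (ρ i) (μ i))
    (hnonneg : ∀ i, 0 ≤ᵐ[μ i] ρ i) :
    Measure.pi (fun i ↦ (μ i).withDensity fun t ↦ ENNReal.ofReal (ρ i t))
      = (Measure.pi μ).withDensity fun T ↦ ENNReal.ofReal (∏ i, ρ i (T i)) := by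
  have _ (i : ι) : IsFiniteMeasure ((μ i).withDensity fun t ↦ ENNReal.ofReal (ρ i t)) :=
    isFiniteMeasure_withDensity_ofReal (hρ i).2
  refine Measure.pi_eq fun s hs ↦ ?_
  rw [withDensity_apply _ (MeasurableSet.univ_pi hs),
    ← ofReal_integral_eq_lintegral_ofReal (Integrable.fintype_prod_dep hρ).integrableOn
      (ae_restrict_of_ae (ae_nonneg_prod_comp_eval hnonneg)),
    Measure.restrict_pi_pi, integral_fintype_prod_eq_prod,
    ENNReal.ofReal_prod_of_nonneg fun i _ ↦
      integral_nonneg_of_ae (ae_restrict_of_ae (hnonneg i))]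
  refine Finset.prod_congr rfl fun i _ ↦ ?_
  rw [withDensity_apply _ (hs i), ofReal_integral_eq_lintegral_ofReal (hρ i).integrableOn
    (ae_restrict_of_ae (hnonneg i))]

end ProductDensity

section Density

variable {Ω : Type*} [MeasurableSpace Ω] {μ : Measure Ω} {ρ g : Ω → ℝ}

theorem isProbabilityMeasure_withDensity_ofReal (hnonneg : 0 ≤ᵐ[μ] ρ)
    (hprob : ∫ t, ρ t ∂μ = 1) :
    IsProbabilityMeasure (μ.withDensity fun t ↦ ENNReal.ofReal (ρ t)) where
  measure_univ := by
    rw [withDensity_apply _ .univ, Measure.restrict_univ, ← ofReal_integral_eq_lintegral_ofReal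
      (.of_integral_ne_zero (by simp [hprob])) hnonneg, hprob, ENNReal.ofReal_one]

theorem integral_withDensity_ofReal (hρ : AEMeasurable ρ μ) (hnonneg : 0 ≤ᵐ[μ] ρ) :
    ∫ t, g t ∂(μ.withDensity fun t ↦ ENNReal.ofReal (ρ t)) = ∫ t, ρ t * g t ∂μ := by
  rw [integral_withDensity_eq_integral_toReal_smul₀ hρ.ennreal_ofReal (by simp)]
  refine integral_congr_ae ?_
  filter_upwards [hnonneg] with t ht
  rw [ENNReal.toReal_ofReal ht, smul_eq_mul]

theorem integral_div_withDensity_ofReal (hρ : AEMeasurable ρ μ) (hpos : ∀ᵐ t ∂μ, 0 < ρ t) :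
    ∫ t, g t / ρ t ∂(μ.withDensity fun t ↦ ENNReal.ofReal (ρ t)) = ∫ t, g t ∂μ := by
  rw [integral_withDensity_ofReal hρ (hpos.mono fun _ ht ↦ ht.le)]
  refine integral_congr_ae ?_
  filter_upwards [hpos] with t ht
  field_simp

theorem memLp_two_div_withDensity_ofReal (hρ : AEMeasurable ρ μ) (hpos : ∀ᵐ t ∂μ, 0 < ρ t)
    (hg : AEStronglyMeasurable g μ) (hint : Integrable (fun t ↦ g t ^ 2 / ρ t) μ) :
    MemLp (fun t ↦ g t / ρ t) 2 (μ.withDensity fun t ↦ ENNReal.ofReal (ρ t)) := by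
  have hmeas : AEStronglyMeasurable (fun t ↦ g t / ρ t) μ :=
    (hg.aemeasurable.div hρ).aestronglyMeasurable
  rw [memLp_two_iff_integrable_sq (hmeas.mono_ac (withDensity_absolutelyContinuous _ _)),
    integrable_withDensity_iff_integrable_smul₀' hρ.ennreal_ofReal (by simp)]
  refine hint.congr ?_
  filter_upwards [hpos] with t ht
  rw [ENNReal.toReal_ofReal ht.le, smul_eq_mul]
  field_simp

end Density

section ImportanceSampling

variable {ι Ω X : Type*} [MeasurableSpace Ω] [MeasurableSpace X] {μ : Measure Ω} {ν : Measure X}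
  [SFinite ν] {ρ : Ω → ℝ} {K : Ω → X → ℝ}

theorem integrable_prod_sq_div (hρ : AEMeasurable ρ μ) (hnonneg : 0 ≤ᵐ[μ] ρ)
    (hK : AEStronglyMeasurable (uncurry K) (μ.prod ν)) (hKsq : ∀ᵐ t ∂μ, MemLp (K t) 2 ν)
    (hint : Integrable (fun t ↦ (∫ x, K t x ^ 2 ∂ν) / ρ t) μ) :
    Integrable (fun p : Ω × X ↦ K p.1 p.2 ^ 2 / ρ p.1) (μ.prod ν) := by
  have hmeas : AEStronglyMeasurable (fun p : Ω × X ↦ K p.1 p.2 ^ 2 / ρ p.1) (μ.prod ν) :=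
    ((hK.aemeasurable.pow_const 2).div hρ.comp_fst).aestronglyMeasurable
  refine (integrable_prod_iff hmeas).2 ⟨hKsq.mono fun t ht ↦ ht.integrable_sq.div_const (ρ t), ?_⟩
  refine hint.congr ?_
  filter_upwards [hnonneg] with t ht
  rw [← integral_div]
  exact integral_congr_ae <| .of_forall fun x ↦
    (Real.norm_of_nonneg (div_nonneg (sq_nonneg _) ht)).symm

theorem memLp_two_uncurry_div_withDensity_ofReal (hρ : AEMeasurable ρ μ)
    (hpos : ∀ᵐ t ∂μ, 0 < ρ t) (hK : AEStronglyMeasurable (uncurry K) (μ.prod ν))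
    (hKsq : ∀ᵐ t ∂μ, MemLp (K t) 2 ν)
    (hint : Integrable (fun t ↦ (∫ x, K t x ^ 2 ∂ν) / ρ t) μ) :
    MemLp (uncurry fun t x ↦ K t x / ρ t) 2
      ((μ.withDensity fun t ↦ ENNReal.ofReal (ρ t)).prod ν) := by
  rw [prod_withDensity_left₀ hρ.ennreal_ofReal]
  exact memLp_two_div_withDensity_ofReal hρ.comp_fst
    (Measure.quasiMeasurePreserving_fst.ae hpos) hK
    (integrable_prod_sq_div hρ (hpos.mono fun _ ht ↦ ht.le) hK hKsq hint)

variable [Fintype ι]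

theorem integral_pi_withDensity_ofReal [SigmaFinite μ] (hρ : Integrable ρ μ)
    (hnonneg : 0 ≤ᵐ[μ] ρ) (F : (ι → Ω) → ℝ) :
    ∫ T, F T ∂(Measure.pi fun _ ↦ μ.withDensity fun t ↦ ENNReal.ofReal (ρ t))
      = ∫ T, (∏ k, ρ (T k)) * F T ∂(Measure.pi fun _ ↦ μ) := by
  rw [pi_withDensity_ofReal (fun _ ↦ hρ) fun _ ↦ hnonneg,
    integral_withDensity_ofReal (Integrable.fintype_prod fun _ ↦ hρ).aemeasurable
      (ae_nonneg_prod_comp_eval fun _ ↦ hnonneg)]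

theorem integral_prod_mul_integral_sq_importanceSampling_error [Nonempty ι] [SigmaFinite μ]
    (hpos : ∀ᵐ t ∂μ, 0 < ρ t) (hprob : ∫ t, ρ t ∂μ = 1)
    (hK : AEStronglyMeasurable (uncurry K) (μ.prod ν)) (hKsq : ∀ᵐ t ∂μ, MemLp (K t) 2 ν)
    (hint : Integrable (fun t ↦ (∫ x, K t x ^ 2 ∂ν) / ρ t) μ) :
    ∫ T : ι → Ω, (∏ k, ρ (T k)) *
        ∫ x, (∑ k, 1 / (Fintype.card ι * ρ (T k)) * K (T k) x - ∫ t, K t x ∂μ) ^ 2 ∂ν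
        ∂(Measure.pi fun _ ↦ μ)
      = (∫ t, (∫ x, K t x ^ 2 ∂ν) / ρ t ∂μ - ∫ x, (∫ t, K t x ∂μ) ^ 2 ∂ν)
        / Fintype.card ι := by
  have hρ : Integrable ρ μ := .of_integral_ne_zero (by simp [hprob])
  have hnonneg : 0 ≤ᵐ[μ] ρ := hpos.mono fun _ ht ↦ ht.le
  have _ := isProbabilityMeasure_withDensity_ofReal hnonneg hprob
  set P := μ.withDensity fun t ↦ ENNReal.ofReal (ρ t) with hP
  have estimator (T : ι → Ω) (x : X) : ∑ k, 1 / (Fintype.card ι * ρ (T k)) * K (T k) x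
      = sampleMean (fun t ↦ K t x / ρ t) T :=
    sum_one_div_mul_eq_sampleMean_div (K · x) ρ T
  have mean (x : X) : ∫ t, K t x / ρ t ∂P = ∫ t, K t x ∂μ :=
    integral_div_withDensity_ofReal hρ.aemeasurable hpos
  have second_moment : ∫ t, ∫ x, (K t x / ρ t) ^ 2 ∂ν ∂P
      = ∫ t, (∫ x, K t x ^ 2 ∂ν) / ρ t ∂μ := by
    simp only [div_pow, integral_div, sq (ρ _), ← div_div]
    exact integral_div_withDensity_ofReal hρ.aemeasurable hpos
  have mean_square_error := integral_integral_sq_sampleMean_sub_integral (ι := ι)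
    (memLp_two_uncurry_div_withDensity_ofReal hρ.aemeasurable hpos hK hKsq hint)
  rw [← integral_pi_withDensity_ofReal hρ hnonneg]
  simpa only [← hP, estimator, mean, second_moment] using mean_square_error

end ImportanceSampling

section Box

variable {ι : Type*}

theorem measurableSet_forall_lt [Countable ι] :
    MeasurableSet {p : (ι → ℝ) × (ι → ℝ) | ∀ j, p.1 j < p.2 j} := by
  measurability

variable [Fintype ι]

theorem volume_restrict_Icc_pi {α : ι → Type*} [∀ i, MeasureSpace (α i)] [∀ i, Preorder (α i)]
    [∀ i, SigmaFinite (volume : Measure (α i))] (a b : ∀ i, α i) :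
    (volume : Measure (∀ i, α i)).restrict (Set.Icc a b)
      = Measure.pi fun i ↦ volume.restrict (Set.Icc (a i) (b i)) := by
  rw [← Set.pi_univ_Icc, volume_pi, Measure.restrict_pi_pi]

theorem setIntegral_Icc_prod_pow (n : ℕ) :
    ∫ x in Set.Icc (0 : ι → ℝ) 1, (∏ j, x j) ^ n = (1 / (n + 1) : ℝ) ^ Fintype.card ι := by
  simp only [← Finset.prod_pow]
  rw [volume_restrict_Icc_pi]
  simp only [Pi.zero_apply, Pi.one_apply]
  rw [integral_fintype_prod_eq_pow (fun s : ℝ ↦ s ^ n), integral_Icc_eq_integral_Ioc,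
    ← intervalIntegral.integral_of_le zero_le_one, integral_pow]
  simp

/-- The indicator `1_{[0,x)}(t)` of the half-open box with upper corner `x`. The lower corner plays
no role for points `t` in the unit cube, so the box is unbounded below. -/
noncomputable def boxIndicator (t x : ι → ℝ) : ℝ :=
  if ∀ j, t j < x j then 1 else 0

-- Over `Fin d` the inferred decidability instance differs from the one inside `boxIndicator`.
theorem ite_eq_boxIndicator (t x : ι → ℝ) [Decidable (∀ j, t j < x j)] :
    (if ∀ j, t j < x j then 1 else 0) = boxIndicator t x := by
  simp [boxIndicator]

theorem boxIndicator_sq (t x : ι → ℝ) : boxIndicator t x ^ 2 = boxIndicator t x := by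
  simp [boxIndicator]

theorem measurable_uncurry_boxIndicator : Measurable (uncurry (boxIndicator (ι := ι))) :=
  .ite measurableSet_forall_lt measurable_const measurable_const

theorem setIntegral_boxIndicator_left {a b x : ι → ℝ} (hx : x ∈ Set.Icc a b) :
    ∫ t in Set.Icc a b, boxIndicator t x = ∏ j, (x j - a j) := by
  have box : Set.Icc a b ∩ {t | ∀ j, t j < x j} = Set.univ.pi fun j ↦ Set.Ico (a j) (x j) := by
    ext t
    simp only [Set.mem_inter_iff, Set.mem_Icc, Set.mem_ofPred_eq, Set.mem_univ_pi, Set.mem_Ico,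
      Pi.le_def]
    exact ⟨fun h j ↦ ⟨h.1.1 j, h.2 j⟩,
      fun h ↦ ⟨⟨fun j ↦ (h j).1, fun j ↦ (h j).2.le.trans (hx.2 j)⟩, fun j ↦ (h j).2⟩⟩
  have hmeas : MeasurableSet {t : ι → ℝ | ∀ j, t j < x j} :=
    measurable_prodMk_right measurableSet_forall_lt
  calc ∫ t in Set.Icc a b, boxIndicator t x
      = ∫ t in Set.Icc a b, {t | ∀ j, t j < x j}.indicator 1 t := by
        simp [boxIndicator, Set.indicator]
    _ = volume.real (Set.univ.pi fun j ↦ Set.Ico (a j) (x j)) := by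
        rw [integral_indicator_one hmeas, measureReal_restrict_apply hmeas, Set.inter_comm, box]
    _ = ∏ j, (x j - a j) := Real.volume_pi_Ico_toReal hx.1

theorem setIntegral_boxIndicator_right {a b t : ι → ℝ} (ht : t ∈ Set.Icc a b) :
    ∫ x in Set.Icc a b, boxIndicator t x = ∏ j, (b j - t j) := by
  have box : Set.Icc a b ∩ {x | ∀ j, t j < x j} = Set.univ.pi fun j ↦ Set.Ioc (t j) (b j) := by
    ext x
    simp only [Set.mem_inter_iff, Set.mem_Icc, Set.mem_ofPred_eq, Set.mem_univ_pi, Set.mem_Ioc,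
      Pi.le_def]
    exact ⟨fun h j ↦ ⟨h.2 j, h.1.2 j⟩,
      fun h ↦ ⟨⟨fun j ↦ (ht.1 j).trans (h j).1.le, fun j ↦ (h j).2⟩, fun j ↦ (h j).1⟩⟩
  have hmeas : MeasurableSet {x : ι → ℝ | ∀ j, t j < x j} :=
    measurable_prodMk_left measurableSet_forall_lt
  calc ∫ x in Set.Icc a b, boxIndicator t x
      = ∫ x in Set.Icc a b, {x | ∀ j, t j < x j}.indicator 1 x := by
        simp [boxIndicator, Set.indicator]
    _ = volume.real (Set.univ.pi fun j ↦ Set.Ioc (t j) (b j)) := by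
        rw [integral_indicator_one hmeas, measureReal_restrict_apply hmeas, Set.inter_comm, box]
    _ = ∏ j, (b j - t j) := Real.volume_pi_Ioc_toReal ht.2

theorem setIntegral_zero_one_sq_setIntegral_boxIndicator :
    ∫ x in Set.Icc (0 : ι → ℝ) 1, (∫ t in Set.Icc 0 1, boxIndicator t x) ^ 2
      = 3 ^ (-(Fintype.card ι : ℤ)) := by
  calc ∫ x in Set.Icc (0 : ι → ℝ) 1, (∫ t in Set.Icc 0 1, boxIndicator t x) ^ 2
      = ∫ x in Set.Icc (0 : ι → ℝ) 1, (∏ j, x j) ^ 2 :=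
        setIntegral_congr_fun measurableSet_Icc fun x hx ↦ by
          simp [setIntegral_boxIndicator_left hx]
    _ = 3 ^ (-(Fintype.card ι : ℤ)) := by
        rw [setIntegral_Icc_prod_pow, one_div, inv_pow, zpow_neg, zpow_natCast]
        norm_num

theorem setIntegral_zero_one_sq_boxIndicator_div_ae_eq (ρ : (ι → ℝ) → ℝ) :
    (fun t ↦ (∫ x in Set.Icc 0 1, boxIndicator t x ^ 2) / ρ t)
      =ᵐ[volume.restrict (Set.Icc 0 1)] fun t ↦ (∏ j, (1 - t j)) / ρ t := by
  filter_upwards [ae_restrict_mem measurableSet_Icc] with t ht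
  simp [boxIndicator_sq, setIntegral_boxIndicator_right ht]

theorem memLp_boxIndicator {ν : Measure (ι → ℝ)} [IsFiniteMeasure ν] (t : ι → ℝ) (p : ENNReal) :
    MemLp (boxIndicator t) p ν := by
  refine .of_bound measurable_uncurry_boxIndicator.of_uncurry_left.aestronglyMeasurable 1
    (.of_forall fun x ↦ ?_)
  rw [boxIndicator]
  split_ifs <;> simp

end Box

/-- For i.i.d. points `t₁,…,t_N` in `[0,1]^d` with density `ρd` and
weights `a_k = 1/(N ρd(t_k))`, the expected squared `L₂`-discrepancy equals
`(C - 3^{-d})/N`, where `C = ∫ (∏_j (1 - t_j))/ρd(t) dt`. -/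
theorem expected_squared_discrepancy_density
    (d N : ℕ) (hN : 0 < N)
    (ρd : (Fin d → ℝ) → ℝ)
    (hmeas : Measurable ρd)
    (hnonneg : ∀ t, 0 ≤ ρd t)
    (hprob : ∫ t in Set.Icc (0 : Fin d → ℝ) 1, ρd t = 1)
    (hpos : ∀ᵐ t ∂(volume.restrict (Set.Icc (0 : Fin d → ℝ) 1)), 0 < ρd t)
    (hint : IntegrableOn (fun t : Fin d → ℝ => (∏ j, (1 - t j)) / ρd t)
      (Set.Icc (0 : Fin d → ℝ) 1))
    (C : ℝ)
    (hC : C = ∫ t in Set.Icc (0 : Fin d → ℝ) 1, (∏ j, (1 - t j)) / ρd t) :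
    (∫ T in Set.Icc (0 : Fin N → Fin d → ℝ) 1,
        (∏ k, ρd (T k)) *
          ∫ x in Set.Icc (0 : Fin d → ℝ) 1,
            ((∑ k, (1 / (N * ρd (T k))) *
                (if ∀ j, T k j < x j then (1 : ℝ) else 0)) - ∏ j, x j) ^ 2)
      = (C - (3 : ℝ) ^ (-(d : ℤ))) / N := by
  have : Nonempty (Fin N) := Fin.pos_iff_nonempty.1 hN
  have : IsFiniteMeasure (volume.restrict (Set.Icc (0 : Fin d → ℝ) 1)) :=
    isFiniteMeasure_restrict.2 isCompact_Icc.measure_ne_top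
  have second_moment := setIntegral_zero_one_sq_boxIndicator_div_ae_eq ρd
  have mean_square_error := integral_prod_mul_integral_sq_importanceSampling_error (ι := Fin N)
    hpos hprob measurable_uncurry_boxIndicator.aestronglyMeasurable
    (.of_forall fun t ↦ memLp_boxIndicator t 2) (hint.congr second_moment.symm)
  rw [integral_congr_ae second_moment, ← hC, setIntegral_zero_one_sq_setIntegral_boxIndicator,
    Fintype.card_fin, Fintype.card_fin] at mean_square_error
  rw [volume_restrict_Icc_pi, ← mean_square_error]
  refine integral_congr_ae <| .of_forall fun T ↦ congrArg (_ * ·) <|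
    setIntegral_congr_fun measurableSet_Icc fun x hx ↦ ?_
  have mean : ∫ t in Set.Icc 0 1, boxIndicator t x = ∏ j, x j := by
    simp [setIntegral_boxIndicator_left hx]
  simp only [mean, ite_eq_boxIndicator]
end

section
/- For every measurable function ρ : [0,1] → [0,∞] with ∫_0^1 ρ(t) dt = 1 one has ∫_0^1 (1−t)/ρ(t) dt ≥ 4/9 (with the convention (1−t)/0 = ∞ when t < 1). Moreover, the density ρ*(t) = (3/2)√(1−t) satisfies ∫_0^1 ρ*(t) dt = 1 and attains equality: ∫_0^1 (1−t)/ρ*(t) dt = 4/9. -/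
open MeasureTheory ENNReal

/-! By Cauchy–Schwarz applied to `f = (f / √ρ) · √ρ`, every density `ρ` satisfies
`(∫ f)² ≤ ∫ f² / ρ`, with equality when `ρ` is proportional to `f`. Here `f(t) = √(1 - t)`, whose
integral over `[0, 1]` is `2 / 3`. -/

theorem ofReal_sqrt_sq (x : ℝ) : ENNReal.ofReal √x ^ 2 = ENNReal.ofReal x := by
  rw [← ENNReal.ofReal_pow (Real.sqrt_nonneg x), Real.sq_sqrt', ENNReal.ofReal_max,
    ENNReal.ofReal_zero, max_zero]

theorem sq_div_rpow_half_mul_rpow_half {x r : ℝ≥0∞} (hr : r ≠ ∞) (hxr : x ^ 2 / r ≠ ∞) :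
    (x ^ 2 / r) ^ (1 / 2 : ℝ) * r ^ (1 / 2 : ℝ) = x := by
  have sq_eq : x ^ 2 / r * r = x ^ 2 :=
    ENNReal.div_mul_cancel' (fun hr₀ ↦ by_contra fun hx ↦ hxr (by rw [hr₀, ENNReal.div_zero hx]))
      (fun h ↦ absurd h hr)
  rw [← ENNReal.mul_rpow_of_nonneg _ _ one_half_pos.le, sq_eq, ← ENNReal.rpow_natCast,
    ← ENNReal.rpow_mul]
  norm_num

theorem sq_div_mul_self {x : ℝ≥0∞} (hx : x ≠ ∞) (c : ℝ≥0∞) : x ^ 2 / (c * x) = c⁻¹ * x := by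
  rcases eq_or_ne x 0 with rfl | hx₀
  · simp
  · rw [div_eq_mul_inv, ENNReal.mul_inv (.inr hx) (.inr hx₀), sq, mul_comm c⁻¹, ← mul_assoc,
      ENNReal.mul_inv_cancel_right hx₀ hx, mul_comm]

section

variable {α : Type*} {mα : MeasurableSpace α} {μ : Measure α} {f ρ : α → ℝ≥0∞}

theorem sq_lintegral_div_lintegral_le_lintegral_sq_div (hf : AEMeasurable f μ)
    (hρ : AEMeasurable ρ μ) :
    (∫⁻ a, f a ∂μ) ^ 2 / ∫⁻ a, ρ a ∂μ ≤ ∫⁻ a, f a ^ 2 / ρ a ∂μ := by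
  rcases eq_or_ne (∫⁻ a, ρ a ∂μ) ∞ with hρ_top | hρ_top
  · simp [hρ_top]
  rcases eq_or_ne (∫⁻ a, f a ^ 2 / ρ a ∂μ) ∞ with hq_top | hq_top
  · simp [hq_top]
  have hq : AEMeasurable (fun a ↦ f a ^ 2 / ρ a) μ := (hf.pow_const 2).div hρ
  have cauchy_schwarz : ∫⁻ a, f a ∂μ ≤
      (∫⁻ a, f a ^ 2 / ρ a ∂μ) ^ (1 / 2 : ℝ) * (∫⁻ a, ρ a ∂μ) ^ (1 / 2 : ℝ) := by
    calc ∫⁻ a, f a ∂μ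
        = ∫⁻ a, (f a ^ 2 / ρ a) ^ (1 / 2 : ℝ) * ρ a ^ (1 / 2 : ℝ) ∂μ := by
          refine lintegral_congr_ae ?_
          filter_upwards [ae_lt_top' hρ hρ_top, ae_lt_top' hq hq_top] with a hρa hqa
          exact (sq_div_rpow_half_mul_rpow_half hρa.ne hqa.ne).symm
      _ ≤ _ := ENNReal.lintegral_mul_norm_pow_le hq hρ (by norm_num) (by norm_num) (by norm_num)
  refine ENNReal.div_le_of_le_mul ?_
  calc (∫⁻ a, f a ∂μ) ^ 2
      ≤ ((∫⁻ a, f a ^ 2 / ρ a ∂μ) ^ (1 / 2 : ℝ) * (∫⁻ a, ρ a ∂μ) ^ (1 / 2 : ℝ)) ^ 2 := by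
        gcongr
    _ = (∫⁻ a, f a ^ 2 / ρ a ∂μ) * ∫⁻ a, ρ a ∂μ := by
        rw [← ENNReal.mul_rpow_of_nonneg _ _ one_half_pos.le, ← ENNReal.rpow_mul_natCast]
        norm_num

theorem lintegral_sq_div_const_mul_self (hf : AEMeasurable f μ) (hf_top : ∀ᵐ a ∂μ, f a ≠ ∞)
    (c : ℝ≥0∞) : ∫⁻ a, f a ^ 2 / (c * f a) ∂μ = c⁻¹ * ∫⁻ a, f a ∂μ := by
  rw [← lintegral_const_mul'' _ hf]
  exact lintegral_congr_ae (hf_top.mono fun a ha ↦ sq_div_mul_self ha c)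

end

theorem setLIntegral_Icc_ofReal_sqrt_sub {a b : ℝ} (hab : a ≤ b) :
    ∫⁻ t in Set.Icc a b, ENNReal.ofReal √(b - t) =
      ENNReal.ofReal (2 / 3 * (b - a) ^ (3 / 2 : ℝ)) := by
  have integral_eq : ∫ t in a..b, √(b - t) = 2 / 3 * (b - a) ^ (3 / 2 : ℝ) := by
    rw [intervalIntegral.integral_comp_sub_left (fun x ↦ √x) b]
    simp only [Real.sqrt_eq_rpow]
    rw [integral_rpow (.inl (by norm_num)), sub_self, Real.zero_rpow (by norm_num), sub_zero,
      show (1 / 2 + 1 : ℝ) = 3 / 2 by norm_num]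
    ring
  rw [← integral_eq, intervalIntegral.integral_of_le hab, ← integral_Icc_eq_integral_Ioc,
    ofReal_integral_eq_lintegral_ofReal (ContinuousOn.integrableOn_Icc (by fun_prop))
      (.of_forall fun t ↦ Real.sqrt_nonneg _)]

/-- For every probability density `ρ` on `[0,1]` one has
`∫_0^1 (1-t)/ρ(t) dt ≥ 4/9`, and the density `ρ*(t) = (3/2)√(1-t)` is a
probability density attaining equality. -/
theorem C_K1_min_density :
    (∀ ρ : ℝ → ℝ≥0∞, Measurable ρ →
        (∫⁻ t in Set.Icc (0 : ℝ) 1, ρ t) = 1 →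
        ENNReal.ofReal (4 / 9) ≤ ∫⁻ t in Set.Icc (0 : ℝ) 1, ENNReal.ofReal (1 - t) / ρ t) ∧
    (∫⁻ t in Set.Icc (0 : ℝ) 1, ENNReal.ofReal ((3 / 2) * Real.sqrt (1 - t))) = 1 ∧
    (∫⁻ t in Set.Icc (0 : ℝ) 1,
        ENNReal.ofReal (1 - t) / ENNReal.ofReal ((3 / 2) * Real.sqrt (1 - t)))
      = ENNReal.ofReal (4 / 9) := by
  have hf : Measurable fun t : ℝ ↦ ENNReal.ofReal √(1 - t) := by fun_prop
  have integral_f : ∫⁻ t in Set.Icc (0 : ℝ) 1, ENNReal.ofReal √(1 - t) =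
      ENNReal.ofReal (2 / 3) := by
    simpa using setLIntegral_Icc_ofReal_sqrt_sub zero_le_one
  simp only [← ofReal_sqrt_sq (1 - _), ENNReal.ofReal_mul (show (0 : ℝ) ≤ 3 / 2 by norm_num)]
  refine ⟨fun ρ hρ integral_ρ ↦ ?_, ?_, ?_⟩
  · calc ENNReal.ofReal (4 / 9)
        = (∫⁻ t in Set.Icc (0 : ℝ) 1, ENNReal.ofReal √(1 - t)) ^ 2 /
            ∫⁻ t in Set.Icc (0 : ℝ) 1, ρ t := by
          rw [integral_f, integral_ρ, div_one, ← ENNReal.ofReal_pow (by norm_num)]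
          norm_num
      _ ≤ _ := sq_lintegral_div_lintegral_le_lintegral_sq_div hf.aemeasurable hρ.aemeasurable
  · rw [lintegral_const_mul _ hf, integral_f, ← ENNReal.ofReal_mul (by norm_num)]
    norm_num
  · rw [lintegral_sq_div_const_mul_self hf.aemeasurable (.of_forall fun _ ↦ ofReal_ne_top),
      integral_f, ← ENNReal.ofReal_inv_of_pos (by norm_num), ← ENNReal.ofReal_mul (by norm_num)]
    norm_num
end

section
/- Let p ∈ [1,∞), d ∈ ℕ, and let ρ_d be a measurable probability density on [0,1]^d with 0 < c_0 ≤ ρ_d(t) for almost every t ∈ [0,1]^d (some constant c_0). Let t_1,…,t_N be i.i.d. with law ρ_d(t)dt and weights a_k = 1/(N ρ_d(t_k)). Then lim_{N→∞} N^{p/2} · E[∫_{[0,1]^d} |Δ(x)|^p dx] = (2^{p/2}/√π) · Γ((p+1)/2) · ∫_{[0,1]^d} ( ∫_{[0,1]^d} 1_{[0,x)}(t)/ρ_d(t) dt − (x_1⋯x_d)² )^{p/2} dx. -/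
open MeasureTheory Filter

/-!
Under the law `ρ(t) dt` the variable `1_{[0,x)}(t) / ρ(t)` has mean `x₁⋯x_d` and variance
`∫ 1_{[0,x)} / ρ - (x₁⋯x_d)²`, so `√N Δ(x)` is a normalised sum of i.i.d. centred variables and is
asymptotically Gaussian for every `x`. The lower bound on `ρ` makes the summands bounded, hence the
normalised sums subgaussian with a constant independent of `N` and `x`. This bounds all their
absolute moments uniformly, which upgrades convergence in distribution to convergence of the `p`-th
absolute moments and supplies the dominating constant for integrating the limit over `x`.
-/

open ProbabilityTheory
open scoped NNReal ENNReal Topology BoundedContinuousFunction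

section GaussianMoments

/-- The absolute moment `E|Z|^p` of a standard normal random variable `Z`, in closed
form. -/
noncomputable def stdGaussianAbsMoment (p : ℝ) : ℝ :=
  (2 : ℝ) ^ (p / 2) / √Real.pi * Real.Gamma ((p + 1) / 2)

lemma integral_abs_rpow_mul_exp_neg_mul_sq {p b : ℝ} (hp : -1 < p) (hb : 0 < b) :
    ∫ s : ℝ, |s| ^ p * Real.exp (-b * |s| ^ (2 : ℝ)) =
      b ^ (-(p + 1) / 2) * Real.Gamma ((p + 1) / 2) := by
  rw [integral_comp_abs (f := fun s ↦ s ^ p * Real.exp (-b * s ^ (2 : ℝ))),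
    integral_rpow_mul_exp_neg_mul_rpow two_pos hp hb]
  ring

lemma integral_abs_rpow_gaussianReal_of_ne_zero {p : ℝ} (hp : -1 < p) {v : ℝ≥0} (hv : v ≠ 0) :
    ∫ s, |s| ^ p ∂gaussianReal 0 v = stdGaussianAbsMoment p * (v : ℝ) ^ (p / 2) := by
  have hv_pos : (0 : ℝ) < v := by positivity
  have density_mul (s : ℝ) : gaussianPDFReal 0 v s • |s| ^ p =
      (√(2 * Real.pi * v))⁻¹ * (|s| ^ p * Real.exp (-(2 * (v : ℝ))⁻¹ * |s| ^ (2 : ℝ))) := by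
    rw [gaussianPDFReal, smul_eq_mul, sub_zero, Real.rpow_two, sq_abs, neg_mul, ← div_eq_inv_mul,
      neg_div]
    ring_nf
  have scale_rpow : (2 * (v : ℝ))⁻¹ ^ (-(p + 1) / 2) =
      2 ^ (p / 2) * (v : ℝ) ^ (p / 2) * √(2 * v) := by
    rw [Real.inv_rpow (by positivity), ← Real.rpow_neg (by positivity),
      ← Real.mul_rpow zero_le_two hv_pos.le, Real.sqrt_eq_rpow, ← Real.rpow_add (by positivity)]
    ring_nf
  rw [integral_gaussianReal_eq_integral_smul hv]
  simp_rw [density_mul]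
  rw [integral_const_mul, integral_abs_rpow_mul_exp_neg_mul_sq hp (by positivity), scale_rpow,
    mul_right_comm 2 Real.pi, Real.sqrt_mul (by positivity), stdGaussianAbsMoment]
  field_simp

lemma integral_abs_rpow_gaussianReal {p : ℝ} (hp : 0 < p) (v : ℝ≥0) :
    ∫ s, |s| ^ p ∂gaussianReal 0 v = stdGaussianAbsMoment p * (v : ℝ) ^ (p / 2) := by
  obtain rfl | hv := eq_or_ne v 0
  · simp [hp.ne']
  · exact integral_abs_rpow_gaussianReal_of_ne_zero (by linarith) hv

end GaussianMoments

section ConvergenceOfMeans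

lemma abs_sub_clamp_le_sq_div {M : ℝ} (hM : 0 < M) (y : ℝ) :
    |y - max (-M) (min y M)| ≤ y ^ 2 / M := by
  rw [le_div_iff₀ hM]
  obtain hlow | hlow := le_total y (-M)
  · rw [max_eq_left ((min_le_left y M).trans hlow), abs_of_nonpos (by linarith)]
    nlinarith
  obtain hhigh | hhigh := le_total y M
  · rw [min_eq_left hhigh, max_eq_right hlow, sub_self, abs_zero, zero_mul]
    positivity
  · rw [min_eq_right hhigh, max_eq_right (by linarith), abs_of_nonneg (by linarith)]
    nlinarith

lemma abs_integral_sub_integral_clamp_le {Ω : Type*} [MeasurableSpace Ω] {P : Measure Ω}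
    [IsFiniteMeasure P] {Y : Ω → ℝ} (hY : MemLp Y 2 P) {M : ℝ} (hM : 0 < M) :
    |∫ ω, Y ω ∂P - ∫ ω, max (-M) (min (Y ω) M) ∂P| ≤ (∫ ω, Y ω ^ 2 ∂P) / M := by
  have hY_int : Integrable Y P := hY.integrable one_le_two
  have hclamp_int : Integrable (fun ω ↦ max (-M) (min (Y ω) M)) P :=
    (integrable_const _).sup (hY_int.inf (integrable_const _))
  calc |∫ ω, Y ω ∂P - ∫ ω, max (-M) (min (Y ω) M) ∂P|
      = |∫ ω, (Y ω - max (-M) (min (Y ω) M)) ∂P| := by rw [integral_sub hY_int hclamp_int]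
    _ ≤ ∫ ω, |Y ω - max (-M) (min (Y ω) M)| ∂P := abs_integral_le_integral_abs
    _ ≤ ∫ ω, Y ω ^ 2 / M ∂P :=
        integral_mono (hY_int.sub hclamp_int).abs (hY.integrable_sq.div_const M)
          fun ω ↦ abs_sub_clamp_le_sq_div hM (Y ω)
    _ = (∫ ω, Y ω ^ 2 ∂P) / M := integral_div _ _

variable {ι Ω' : Type*} {Ω : ι → Type*} [∀ i, MeasurableSpace (Ω i)] [MeasurableSpace Ω']
  {P : (i : ι) → Measure (Ω i)} [∀ i, IsProbabilityMeasure (P i)]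
  {Q : Measure Ω'} [IsProbabilityMeasure Q] {l : Filter ι}

lemma tendsto_integral_comp_of_tendstoInDistribution {E : Type*} [TopologicalSpace E]
    [MeasurableSpace E] [OpensMeasurableSpace E] {X : (i : ι) → Ω i → E} {Z : Ω' → E}
    (h : TendstoInDistribution X l Z P Q) (f : E →ᵇ ℝ) :
    Tendsto (fun i ↦ ∫ ω, f (X i ω) ∂P i) l (𝓝 (∫ ω, f (Z ω) ∂Q)) := by
  have hf {μ : Measure E} : AEStronglyMeasurable f μ :=
    f.continuous.measurable.aestronglyMeasurable
  have hlaws := ProbabilityMeasure.tendsto_iff_forall_integral_tendsto.1 h.tendsto f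
  simp only [ProbabilityMeasure.coe_mk] at hlaws
  rw [integral_map h.aemeasurable_limit hf] at hlaws
  exact hlaws.congr fun i ↦ integral_map (h.forall_aemeasurable i) hf

lemma tendsto_integral_of_tendstoInDistribution_of_integral_sq_le
    {X : (i : ι) → Ω i → ℝ} {Z : Ω' → ℝ} (h : TendstoInDistribution X l Z P Q)
    (hX : ∀ i, MemLp (X i) 2 (P i)) (hZ : MemLp Z 2 Q) {B : ℝ}
    (hB : ∀ i, ∫ ω, X i ω ^ 2 ∂P i ≤ B) :
    Tendsto (fun i ↦ ∫ ω, X i ω ∂P i) l (𝓝 (∫ ω, Z ω ∂Q)) := by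
  -- The clamped means converge to the true ones uniformly in `i`, so the two limits commute.
  have hunif : TendstoUniformly (fun (M : ℝ) i ↦ ∫ ω, max (-M) (min (X i ω) M) ∂P i)
      (fun i ↦ ∫ ω, X i ω ∂P i) atTop := by
    have hbound : Tendsto (fun M : ℝ ↦ B / M) atTop (𝓝 0) :=
      tendsto_const_nhds.div_atTop tendsto_id
    refine Metric.tendstoUniformly_iff.2 fun ε hε ↦ ?_
    filter_upwards [eventually_gt_atTop 0, hbound.eventually_lt_const hε] with M hM hBM i
    refine lt_of_le_of_lt ((abs_integral_sub_integral_clamp_le (hX i) hM).trans ?_) hBM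
    gcongr
    exact hB i
  have hclamp (M : ℝ) : Tendsto (fun i ↦ ∫ ω, max (-M) (min (X i ω) M) ∂P i) l
      (𝓝 (∫ ω, max (-M) (min (Z ω) M) ∂Q)) :=
    tendsto_integral_comp_of_tendstoInDistribution h
      (BoundedContinuousFunction.ofNormedAddCommGroup (fun y ↦ max (-M) (min y M)) (by fun_prop) |M|
        fun y ↦ abs_le.2 ⟨(neg_le_neg (le_abs_self M)).trans (le_max_left _ _),
          max_le (neg_le_abs M) ((min_le_right _ _).trans (le_abs_self M))⟩)
  have hlim : Tendsto (fun M : ℝ ↦ ∫ ω, max (-M) (min (Z ω) M) ∂Q) atTop (𝓝 (∫ ω, Z ω ∂Q)) := by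
    have hbound : Tendsto (fun M : ℝ ↦ (∫ ω, Z ω ^ 2 ∂Q) / M) atTop (𝓝 0) :=
      tendsto_const_nhds.div_atTop tendsto_id
    refine tendsto_iff_dist_tendsto_zero.2
      (squeeze_zero' (Eventually.of_forall fun _ ↦ dist_nonneg) ?_ hbound)
    filter_upwards [eventually_gt_atTop 0] with M hM
    rw [dist_comm]
    exact abs_integral_sub_integral_clamp_le hZ hM
  exact hunif.tendsto_of_eventually_tendsto (Eventually.of_forall hclamp) hlim

end ConvergenceOfMeans

section SubgaussianMoments

variable {Ω : Type*} [MeasurableSpace Ω] {P : Measure Ω} {S : Ω → ℝ} {c c' : ℝ≥0}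

lemma hasSubgaussianMGF_mono (h : HasSubgaussianMGF S c P) (hc : c ≤ c') :
    HasSubgaussianMGF S c' P :=
  ⟨h.integrable_exp_mul, fun t ↦ (h.mgf_le t).trans (by gcongr)⟩

lemma abs_rpow_le_mul_exp_add_exp_neg {q : ℝ} (hq : 0 ≤ q) (s : ℝ) :
    |s| ^ q ≤ q ^ q * (Real.exp (1 * s) + Real.exp (-1 * s)) := by
  have hexp := rpow_abs_le_mul_exp_abs s hq one_ne_zero
  rw [abs_one, div_one, one_mul] at hexp
  rw [one_mul, neg_one_mul]
  exact hexp.trans (by gcongr; exact Real.exp_abs_le s)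

lemma integrable_abs_rpow_of_hasSubgaussianMGF (h : HasSubgaussianMGF S c P) {q : ℝ}
    (hq : 0 ≤ q) : Integrable (fun ω ↦ |S ω| ^ q) P := by
  refine (((h.integrable_exp_mul 1).add (h.integrable_exp_mul (-1))).const_mul (q ^ q)).mono'
    (h.aemeasurable.abs.pow_const q).aestronglyMeasurable (ae_of_all _ fun ω ↦ ?_)
  rw [Real.norm_of_nonneg (by positivity)]
  exact abs_rpow_le_mul_exp_add_exp_neg hq (S ω)

lemma integral_abs_rpow_le_of_hasSubgaussianMGF (h : HasSubgaussianMGF S c P) {q : ℝ}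
    (hq : 0 ≤ q) : ∫ ω, |S ω| ^ q ∂P ≤ q ^ q * (2 * Real.exp (c / 2)) := by
  have hint (t : ℝ) := h.integrable_exp_mul t
  calc ∫ ω, |S ω| ^ q ∂P
      ≤ ∫ ω, q ^ q * (Real.exp (1 * S ω) + Real.exp (-1 * S ω)) ∂P :=
        integral_mono (integrable_abs_rpow_of_hasSubgaussianMGF h hq)
          (((hint 1).add (hint (-1))).const_mul _) fun ω ↦ abs_rpow_le_mul_exp_add_exp_neg hq (S ω)
    _ = q ^ q * (mgf S P 1 + mgf S P (-1)) := by
        rw [integral_const_mul, integral_add (hint 1) (hint (-1))]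
        rfl
    _ ≤ q ^ q * (2 * Real.exp (c / 2)) := by
        gcongr
        have hone := h.mgf_le 1
        have hneg := h.mgf_le (-1)
        norm_num at hone hneg
        linarith

end SubgaussianMoments

section CentralLimitMoments

lemma memLp_two_abs_rpow_iff {Ω : Type*} [MeasurableSpace Ω] {P : Measure Ω} {S : Ω → ℝ}
    (hS : AEMeasurable S P) (p : ℝ) :
    MemLp (fun ω ↦ |S ω| ^ p) 2 P ↔ Integrable (fun ω ↦ |S ω| ^ (2 * p)) P := by
  rw [memLp_two_iff_integrable_sq (hS.abs.pow_const p).aestronglyMeasurable]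
  simp_rw [mul_comm 2 p, Real.rpow_mul (abs_nonneg _), Real.rpow_two]

lemma tendsto_integral_abs_rpow_of_hasSubgaussianMGF {ι Ω' : Type*} {Ω : ι → Type*}
    [∀ i, MeasurableSpace (Ω i)] [MeasurableSpace Ω'] {P : (i : ι) → Measure (Ω i)}
    [∀ i, IsProbabilityMeasure (P i)] {Q : Measure Ω'} [IsProbabilityMeasure Q] {l : Filter ι}
    {X : (i : ι) → Ω i → ℝ} {Z : Ω' → ℝ} {c c' : ℝ≥0} (h : TendstoInDistribution X l Z P Q)
    (hX : ∀ i, HasSubgaussianMGF (X i) c (P i)) (hZ : HasSubgaussianMGF Z c' Q) {p : ℝ}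
    (hp : 0 ≤ p) :
    Tendsto (fun i ↦ ∫ ω, |X i ω| ^ p ∂P i) l (𝓝 (∫ ω, |Z ω| ^ p ∂Q)) := by
  have h2p : 0 ≤ 2 * p := by positivity
  refine tendsto_integral_of_tendstoInDistribution_of_integral_sq_le
    (h.continuous_comp (g := fun s ↦ |s| ^ p) (continuous_abs.rpow_const fun _ ↦ Or.inr hp))
    (fun i ↦ (memLp_two_abs_rpow_iff (hX i).aemeasurable p).2
      (integrable_abs_rpow_of_hasSubgaussianMGF (hX i) h2p))
    ((memLp_two_abs_rpow_iff hZ.aemeasurable p).2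
      (integrable_abs_rpow_of_hasSubgaussianMGF hZ h2p))
    fun i ↦ le_trans (le_of_eq ?_) (integral_abs_rpow_le_of_hasSubgaussianMGF (hX i) h2p)
  simp_rw [mul_comm 2 p, Real.rpow_mul (abs_nonneg _), Real.rpow_two]

lemma hasSubgaussianMGF_id_gaussianReal (v : ℝ≥0) : HasSubgaussianMGF id v (gaussianReal 0 v) :=
  ⟨integrable_exp_mul_gaussianReal, fun t ↦ by simp [mgf_id_gaussianReal]⟩

/-- The centred and rescaled partial sum `n^{-1/2} ∑_{k < n} (X_k - E X_0)` of a sequence of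
identically distributed random variables, as in the central limit theorem. -/
noncomputable def normalizedSum {Ω : Type*} [MeasurableSpace Ω] (X : ℕ → Ω → ℝ) (P : Measure Ω)
    (n : ℕ) (ω : Ω) : ℝ :=
  (√n)⁻¹ * (∑ k ∈ Finset.range n, X k ω - n * P[X 0])

variable {Ω : Type*} [MeasurableSpace Ω] {P : Measure Ω} [IsProbabilityMeasure P]
  {X : ℕ → Ω → ℝ} {a b : ℝ}

lemma hasSubgaussianMGF_normalizedSum (hindep : iIndepFun X P)
    (hident : ∀ k, IdentDistrib (X k) (X 0) P P) (hbdd : ∀ᵐ ω ∂P, X 0 ω ∈ Set.Icc a b) (n : ℕ) :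
    HasSubgaussianMGF (normalizedSum X P n) ((‖b - a‖₊ / 2) ^ 2) P := by
  have hcentered (k : ℕ) :
      HasSubgaussianMGF (fun ω ↦ X k ω - P[X 0]) ((‖b - a‖₊ / 2) ^ 2) P := by
    rw [← (hident k).integral_eq]
    exact hasSubgaussianMGF_of_mem_Icc (hident k).aemeasurable_fst
      ((hident k).symm.ae_mem_snd measurableSet_Icc hbdd)
  have hcentered_indep : iIndepFun (fun k ω ↦ X k ω - P[X 0]) P :=
    hindep.comp (fun _ s ↦ s - ∫ ω, X 0 ω ∂P) fun _ ↦ by fun_prop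
  have hsum := (HasSubgaussianMGF.sum_of_iIndepFun hcentered_indep (s := Finset.range n)
    fun k _ ↦ hcentered k).const_mul (√n)⁻¹
  simp only [Finset.sum_sub_distrib, Finset.sum_const, Finset.card_range, nsmul_eq_mul] at hsum
  refine hasSubgaussianMGF_mono hsum ?_
  rw [← NNReal.coe_le_coe]
  change (√n)⁻¹ ^ 2 * ((n * (‖b - a‖₊ / 2) ^ 2 : ℝ≥0) : ℝ) ≤ _
  rw [NNReal.coe_mul, NNReal.coe_natCast, inv_pow, Real.sq_sqrt n.cast_nonneg, ← mul_assoc]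
  exact mul_le_of_le_one_left (by positivity) inv_mul_le_one

lemma integral_abs_rpow_normalizedSum_le (hindep : iIndepFun X P)
    (hident : ∀ k, IdentDistrib (X k) (X 0) P P) (hbdd : ∀ᵐ ω ∂P, X 0 ω ∈ Set.Icc a b)
    {p : ℝ} (hp : 0 ≤ p) (n : ℕ) :
    ∫ ω, |normalizedSum X P n ω| ^ p ∂P ≤ p ^ p * (2 * Real.exp ((b - a) ^ 2 / 8)) := by
  refine (integral_abs_rpow_le_of_hasSubgaussianMGF
    (hasSubgaussianMGF_normalizedSum hindep hident hbdd n) hp).trans_eq ?_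
  congr 3
  rw [NNReal.coe_pow, NNReal.coe_div, coe_nnnorm, div_pow, Real.norm_eq_abs, sq_abs, div_div]
  norm_num

lemma tendsto_integral_abs_rpow_normalizedSum (hindep : iIndepFun X P)
    (hident : ∀ k, IdentDistrib (X k) (X 0) P P) (hbdd : ∀ᵐ ω ∂P, X 0 ω ∈ Set.Icc a b)
    {p : ℝ} (hp : 0 < p) :
    Tendsto (fun n ↦ ∫ ω, |normalizedSum X P n ω| ^ p ∂P) atTop
      (𝓝 (stdGaussianAbsMoment p * Var[X 0; P] ^ (p / 2))) := by
  have hclt := tendstoInDistribution_inv_sqrt_mul_sum_sub HasLaw.id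
    (memLp_of_bounded hbdd (hident 0).aemeasurable_fst.aestronglyMeasurable 2) hindep hident
  have hmoments := tendsto_integral_abs_rpow_of_hasSubgaussianMGF hclt
    (hasSubgaussianMGF_normalizedSum hindep hident hbdd)
    (hasSubgaussianMGF_id_gaussianReal _) hp.le
  simp only [id] at hmoments
  rwa [integral_abs_rpow_gaussianReal hp, Real.coe_toNNReal _ (variance_nonneg _ _)] at hmoments

end CentralLimitMoments

section RandomFields

variable {S Ω : Type*} [MeasurableSpace S] [MeasurableSpace Ω] {P : Measure Ω}
  {Y : S → ℕ → Ω → ℝ}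

lemma measurable_normalizedSum [SFinite P] (hY : ∀ k, Measurable fun z : S × Ω ↦ Y z.1 k z.2)
    (n : ℕ) :
    Measurable fun z : S × Ω ↦ normalizedSum (Y z.1) P n z.2 := by
  have hmean : Measurable fun x ↦ ∫ ω, Y x 0 ω ∂P :=
    (hY 0).stronglyMeasurable.integral_prod_right.measurable
  exact ((Finset.measurable_sum _ fun k _ ↦ hY k).sub
    ((hmean.comp measurable_fst).const_mul _)).const_mul _

variable [IsProbabilityMeasure P] {ν : Measure S} [IsFiniteMeasure ν] {a b p : ℝ}

lemma integrable_prod_abs_rpow_normalizedSum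
    (hY : ∀ k, Measurable fun z : S × Ω ↦ Y z.1 k z.2) (hindep : ∀ x, iIndepFun (Y x) P)
    (hident : ∀ x k, IdentDistrib (Y x k) (Y x 0) P P)
    (hbdd : ∀ x, ∀ᵐ ω ∂P, Y x 0 ω ∈ Set.Icc a b) (hp : 0 ≤ p) (n : ℕ) :
    Integrable (fun z : S × Ω ↦ |normalizedSum (Y z.1) P n z.2| ^ p) (ν.prod P) := by
  have hmeas := ((measurable_normalizedSum (P := P) hY n).abs.pow_const p).stronglyMeasurable
  have hslice (x : S) := integrable_abs_rpow_of_hasSubgaussianMGF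
    (hasSubgaussianMGF_normalizedSum (hindep x) (hident x) (hbdd x) n) hp
  refine (integrable_prod_iff hmeas.aestronglyMeasurable).2 ⟨ae_of_all _ hslice, ?_⟩
  simp_rw [Real.norm_of_nonneg (Real.rpow_nonneg (abs_nonneg _) p)]
  refine .of_bound hmeas.integral_prod_right.aestronglyMeasurable
    (p ^ p * (2 * Real.exp ((b - a) ^ 2 / 8))) (ae_of_all _ fun x ↦ ?_)
  rw [Real.norm_of_nonneg (by positivity)]
  exact integral_abs_rpow_normalizedSum_le (hindep x) (hident x) (hbdd x) hp n

lemma tendsto_integral_integral_abs_rpow_normalizedSum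
    (hY : ∀ k, Measurable fun z : S × Ω ↦ Y z.1 k z.2) (hindep : ∀ x, iIndepFun (Y x) P)
    (hident : ∀ x k, IdentDistrib (Y x k) (Y x 0) P P)
    (hbdd : ∀ x, ∀ᵐ ω ∂P, Y x 0 ω ∈ Set.Icc a b) (hp : 0 < p) :
    Tendsto (fun n ↦ ∫ ω, ∫ x, |normalizedSum (Y x) P n ω| ^ p ∂ν ∂P) atTop
      (𝓝 (stdGaussianAbsMoment p * ∫ x, Var[Y x 0; P] ^ (p / 2) ∂ν)) := by
  have hint (n : ℕ) := integrable_prod_abs_rpow_normalizedSum (ν := ν) hY hindep hident hbdd hp.le n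
  have hswap (n : ℕ) : ∫ ω, ∫ x, |normalizedSum (Y x) P n ω| ^ p ∂ν ∂P =
      ∫ x, ∫ ω, |normalizedSum (Y x) P n ω| ^ p ∂P ∂ν := (integral_integral_swap (hint n)).symm
  simp_rw [hswap, ← integral_const_mul]
  refine tendsto_integral_filter_of_dominated_convergence
    (fun _ ↦ p ^ p * (2 * Real.exp ((b - a) ^ 2 / 8)))
    (.of_forall fun n ↦ (hint n).integral_prod_left.aestronglyMeasurable)
    (.of_forall fun n ↦ ae_of_all _ fun x ↦ ?_) (integrable_const _)
    (ae_of_all _ fun x ↦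
      tendsto_integral_abs_rpow_normalizedSum (hindep x) (hident x) (hbdd x) hp)
  rw [Real.norm_of_nonneg (by positivity)]
  exact integral_abs_rpow_normalizedSum_le (hindep x) (hident x) (hbdd x) hp.le n

lemma tendsto_integral_pi_integral_abs_rpow_sum_sub {E : Type*} [MeasurableSpace E]
    {μ : Measure E} [IsProbabilityMeasure μ] {g : S → E → ℝ} (hg : Measurable g.uncurry)
    (hbdd : ∀ x, ∀ᵐ t ∂μ, g x t ∈ Set.Icc a b) (hp : 0 < p) :
    Tendsto (fun N : ℕ ↦ ∫ T, ∫ x, |(√N)⁻¹ * (∑ k, g x (T k) - N * μ[g x])| ^ p ∂ν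
        ∂Measure.pi fun _ : Fin N ↦ μ) atTop
      (𝓝 (stdGaussianAbsMoment p * ∫ x, Var[g x; μ] ^ (p / 2) ∂ν)) := by
  have hg_meas (x : S) : Measurable (g x) := hg.comp measurable_prodMk_left
  obtain ⟨Ω, _, P, t, ht, hlaw, hindep, _⟩ := exists_iid ℕ μ
  have hmean (x : S) : ∫ ω, g x (t 0 ω) ∂P = ∫ s, g x s ∂μ :=
    (hlaw 0).integral_comp (hg_meas x).aestronglyMeasurable
  have hvar (x : S) : Var[fun ω ↦ g x (t 0 ω); P] = Var[g x; μ] :=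
    ((hlaw 0).measurePreserving (ht 0)).variance_fun_comp (hg_meas x).aemeasurable
  have hsample (N : ℕ) : HasLaw (fun ω (k : Fin N) ↦ t k ω) (Measure.pi fun _ ↦ μ) P :=
    (hindep.precomp Fin.val_injective).hasLaw_pi fun k ↦ hlaw k
  have hlim := tendsto_integral_integral_abs_rpow_normalizedSum (ν := ν)
    (Y := fun x k ω ↦ g x (t k ω))
    (fun k ↦ hg.comp (measurable_fst.prodMk ((ht k).comp measurable_snd)))
    (fun x ↦ hindep.comp (fun _ ↦ g x) fun _ ↦ hg_meas x)
    (fun x k ↦ ((hlaw k).identDistrib (hlaw 0)).comp (hg_meas x))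
    (fun x ↦ ((hlaw 0).measurePreserving (ht 0)).quasiMeasurePreserving.ae (hbdd x)) hp
  simp_rw [hvar] at hlim
  refine hlim.congr fun N ↦ ?_
  have hmeas : Measurable fun z : (Fin N → E) × S ↦
      |(√N)⁻¹ * (∑ k, g z.2 (z.1 k) - N * ∫ s, g z.2 s ∂μ)| ^ p := by
    have hmean_meas : Measurable fun x ↦ ∫ s, g x s ∂μ :=
      hg.stronglyMeasurable.integral_prod_right.measurable
    have hg_eval (k : Fin N) : Measurable fun z : (Fin N → E) × S ↦ g z.2 (z.1 k) :=
      hg.comp (measurable_snd.prodMk ((measurable_pi_apply k).comp measurable_fst))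
    exact (((Finset.measurable_sum _ fun k _ ↦ hg_eval k).sub
      ((hmean_meas.comp measurable_snd).const_mul _)).const_mul _).abs.pow_const p
  rw [← (hsample N).integral_comp hmeas.stronglyMeasurable.integral_prod_right.aestronglyMeasurable]
  simp_rw [normalizedSum, hmean, Finset.sum_range, Function.comp_apply]

end RandomFields

section ImportanceSampling

lemma prod_indicator_univ_pi {κ R : Type*} [Fintype κ] {E : κ → Type*} [CommMonoidWithZero R]
    (s : (k : κ) → Set (E k)) (f : (k : κ) → E k → R) (T : (k : κ) → E k) :
    ∏ k, (s k).indicator (f k) (T k) =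
      (Set.univ.pi s).indicator (fun T ↦ ∏ k, f k (T k)) T := by
  by_cases hT : ∀ k, T k ∈ s k
  · simp [hT]
  · obtain ⟨k, hk⟩ := not_forall.1 hT
    rw [Set.indicator_of_notMem (by simpa using hT)]
    exact Finset.prod_eq_zero (Finset.mem_univ k) (Set.indicator_of_notMem hk _)

lemma pi_withDensity {κ : Type*} [Fintype κ] {E : κ → Type*} [∀ k, MeasurableSpace (E k)]
    (ν : (k : κ) → Measure (E k)) [∀ k, IsProbabilityMeasure (ν k)] {f : (k : κ) → E k → ℝ≥0∞}
    (hf : ∀ k, Measurable (f k)) [∀ k, SigmaFinite ((ν k).withDensity (f k))] :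
    Measure.pi (fun k ↦ (ν k).withDensity (f k)) =
      (Measure.pi ν).withDensity fun T ↦ ∏ k, f k (T k) := by
  refine Measure.pi_eq fun s hs ↦ ?_
  have hindicator (k : κ) : Measurable ((s k).indicator (f k)) := (hf k).indicator (hs k)
  calc (Measure.pi ν).withDensity (fun T ↦ ∏ k, f k (T k)) (Set.univ.pi s)
      = ∫⁻ T, ∏ k, (s k).indicator (f k) (T k) ∂Measure.pi ν := by
        simp_rw [prod_indicator_univ_pi]
        rw [withDensity_apply _ (.univ_pi hs), ← lintegral_indicator (.univ_pi hs)]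
    _ = ∏ k, ∫⁻ T, (s k).indicator (f k) (T k) ∂Measure.pi ν :=
        lintegral_prod_eq_prod_lintegral_of_indepFun _ _
          (iIndepFun_pi fun k ↦ (hindicator k).aemeasurable)
          fun k ↦ (hindicator k).comp (measurable_pi_apply k)
    _ = ∏ k, (ν k).withDensity (f k) (s k) := by
        refine Finset.prod_congr rfl fun k _ ↦ ?_
        rw [withDensity_apply _ (hs k), ← lintegral_indicator (hs k)]
        exact (measurePreserving_eval ν k).lintegral_comp (hindicator k)

lemma indicator_div_mem_Icc {E : Type*} {ρ : E → ℝ} {c₀ : ℝ} (hc₀ : 0 < c₀) (A : Set E)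
    {t : E} (ht : c₀ ≤ ρ t) :
    A.indicator 1 t / ρ t ∈ Set.Icc 0 (1 / c₀) := by
  have hindicator : 0 ≤ A.indicator (1 : E → ℝ) t := Set.indicator_nonneg (by simp) t
  exact ⟨div_nonneg hindicator (hc₀.le.trans ht),
    div_le_div₀ zero_le_one (Set.indicator_le_self' (by simp) t) hc₀ ht⟩

variable {E : Type*} [MeasurableSpace E] {ν : Measure E} {ρ : E → ℝ}

lemma integral_withDensity_ofReal_s6 (hρ : Measurable ρ) (hρ_nonneg : 0 ≤ᵐ[ν] ρ) (f : E → ℝ) :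
    ∫ t, f t ∂ν.withDensity (fun t ↦ ENNReal.ofReal (ρ t)) = ∫ t, ρ t * f t ∂ν := by
  rw [integral_withDensity_eq_integral_toReal_smul hρ.ennreal_ofReal
    (ae_of_all _ fun _ ↦ ENNReal.ofReal_lt_top)]
  refine integral_congr_ae ?_
  filter_upwards [hρ_nonneg] with t ht
  rw [ENNReal.toReal_ofReal ht, smul_eq_mul]

lemma integral_div_withDensity_ofReal_s6 (hρ : Measurable ρ) (hρ_pos : ∀ᵐ t ∂ν, 0 < ρ t)
    (f : E → ℝ) :
    ∫ t, f t / ρ t ∂ν.withDensity (fun t ↦ ENNReal.ofReal (ρ t)) = ∫ t, f t ∂ν := by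
  rw [integral_withDensity_ofReal_s6 hρ (hρ_pos.mono fun _ ↦ le_of_lt)]
  refine integral_congr_ae ?_
  filter_upwards [hρ_pos] with t ht
  exact mul_div_cancel₀ _ ht.ne'

lemma isProbabilityMeasure_withDensity_ofReal_s6 (hρ_nonneg : 0 ≤ᵐ[ν] ρ) (hprob : ∫ t, ρ t ∂ν = 1) :
    IsProbabilityMeasure (ν.withDensity fun t ↦ ENNReal.ofReal (ρ t)) := by
  constructor
  rw [withDensity_apply _ .univ, Measure.restrict_univ,
    ← ofReal_integral_eq_lintegral_ofReal (integrable_of_integral_eq_one hprob) hρ_nonneg, hprob,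
    ENNReal.ofReal_one]

lemma integral_pi_withDensity_ofReal_s6 [IsProbabilityMeasure ν] {κ : Type*} [Fintype κ]
    (hρ : Measurable ρ) (hρ_nonneg : 0 ≤ᵐ[ν] ρ) (F : (κ → E) → ℝ) :
    ∫ T, F T ∂Measure.pi (fun _ ↦ ν.withDensity fun t ↦ ENNReal.ofReal (ρ t)) =
      ∫ T, (∏ k, ρ (T k)) * F T ∂Measure.pi fun _ ↦ ν := by
  have hρ_sample : ∀ᵐ T ∂Measure.pi (fun _ : κ ↦ ν), ∀ k, 0 ≤ ρ (T k) :=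
    ae_all_iff.2 fun k ↦ (Measure.quasiMeasurePreserving_eval (fun _ ↦ ν) k).ae hρ_nonneg
  have hprod_meas : Measurable fun T : κ → E ↦ ∏ k, ρ (T k) :=
    Finset.measurable_prod _ fun k _ ↦ hρ.comp (measurable_pi_apply k)
  have hdensity : (fun T : κ → E ↦ ∏ k, ENNReal.ofReal (ρ (T k))) =ᵐ[Measure.pi fun _ ↦ ν]
      fun T ↦ ENNReal.ofReal (∏ k, ρ (T k)) :=
    hρ_sample.mono fun T hT ↦ (ENNReal.ofReal_prod_of_nonneg fun k _ ↦ hT k).symm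
  rw [pi_withDensity _ fun _ ↦ hρ.ennreal_ofReal, withDensity_congr_ae hdensity,
    integral_withDensity_ofReal_s6 hprod_meas
      (hρ_sample.mono fun T hT ↦ Finset.prod_nonneg fun k _ ↦ hT k)]

lemma variance_indicator_div_withDensity_ofReal {c₀ : ℝ}
    [IsProbabilityMeasure (ν.withDensity fun t ↦ ENNReal.ofReal (ρ t))] (hρ : Measurable ρ)
    (hc₀ : 0 < c₀) (hlb : ∀ᵐ t ∂ν, c₀ ≤ ρ t) {A : Set E} (hA : MeasurableSet A) :
    Var[fun t ↦ A.indicator 1 t / ρ t; ν.withDensity fun t ↦ ENNReal.ofReal (ρ t)] =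
      ∫ t, A.indicator 1 t / ρ t ∂ν - ν.real A ^ 2 := by
  have hρ_pos : ∀ᵐ t ∂ν, 0 < ρ t := hlb.mono fun _ ↦ hc₀.trans_le
  have hmem : MemLp (fun t ↦ A.indicator 1 t / ρ t) 2
      (ν.withDensity fun t ↦ ENNReal.ofReal (ρ t)) :=
    memLp_of_bounded
      ((withDensity_absolutelyContinuous ν _).ae_le
        (hlb.mono fun _ ht ↦ indicator_div_mem_Icc hc₀ A ht))
      ((measurable_one.indicator hA).div hρ).aestronglyMeasurable 2
  have hsq (t : E) : ((fun t ↦ A.indicator 1 t / ρ t) ^ 2) t = A.indicator 1 t / ρ t / ρ t := by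
    by_cases ht : t ∈ A <;> simp [ht, sq, div_eq_mul_inv]
  rw [variance_eq_sub hmem, integral_div_withDensity_ofReal_s6 hρ hρ_pos]
  simp_rw [hsq]
  rw [integral_div_withDensity_ofReal_s6 hρ hρ_pos, integral_indicator_one hA]

end ImportanceSampling

section WeightedDiscrepancy

/-- The discrepancy `∑ k, a k * 1_A (t k) - ν A` on the test set `A` between the measure `ν` and the
points `t k` with weights `a k`. With `ν` the Lebesgue measure on `[0,1]^d` and `A = [0,x)` this is
the value `Δ(x)` of the discrepancy function. -/
noncomputable def discrepancy {κ E : Type*} [Fintype κ] [MeasurableSpace E] (ν : Measure E)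
    (a : κ → ℝ) (t : κ → E) (A : Set E) : ℝ :=
  ∑ k, a k * A.indicator 1 (t k) - ν.real A

lemma sqrt_mul_discrepancy {E : Type*} [MeasurableSpace E] (ν : Measure E) (ρ : E → ℝ) (A : Set E)
    {N : ℕ} (t : Fin N → E) :
    √N * discrepancy ν (fun k ↦ 1 / (N * ρ (t k))) t A =
      (√N)⁻¹ * (∑ k, A.indicator 1 (t k) / ρ (t k) - N * ν.real A) := by
  have hsum : ∑ k, 1 / (N * ρ (t k)) * A.indicator 1 (t k) =
      (N : ℝ)⁻¹ * ∑ k, A.indicator 1 (t k) / ρ (t k) := by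
    rw [Finset.mul_sum]
    exact Finset.sum_congr rfl fun k _ ↦ by ring
  rw [discrepancy, hsum, mul_sub, mul_sub, ← mul_assoc, ← mul_assoc, ← div_eq_mul_inv,
    Real.sqrt_div_self', ← div_eq_inv_mul (N : ℝ), Real.div_sqrt, one_div]

lemma natCast_rpow_half_mul_abs_rpow (N : ℕ) (p s : ℝ) :
    (N : ℝ) ^ (p / 2) * |s| ^ p = |√N * s| ^ p := by
  rw [abs_mul, abs_of_nonneg (Real.sqrt_nonneg _), Real.mul_rpow (by positivity) (by positivity),
    Real.sqrt_eq_rpow, ← Real.rpow_mul N.cast_nonneg]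
  ring_nf

lemma tendsto_rpow_mul_integral_abs_discrepancy_rpow {E S : Type*} [MeasurableSpace E]
    [MeasurableSpace S] {ν : Measure E} [IsProbabilityMeasure ν] {σ : Measure S}
    [IsFiniteMeasure σ] {A : S → Set E} (hA : MeasurableSet {z : S × E | z.2 ∈ A z.1})
    {ρ : E → ℝ} (hρ : Measurable ρ) (hprob : ∫ t, ρ t ∂ν = 1) {c₀ : ℝ} (hc₀ : 0 < c₀)
    (hlb : ∀ᵐ t ∂ν, c₀ ≤ ρ t) {p : ℝ} (hp : 0 < p) :
    Tendsto (fun N : ℕ ↦ (N : ℝ) ^ (p / 2) * ∫ T, (∏ k, ρ (T k)) *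
        ∫ x, |discrepancy ν (fun k ↦ 1 / (N * ρ (T k))) T (A x)| ^ p ∂σ
        ∂Measure.pi fun _ : Fin N ↦ ν) atTop
      (𝓝 (stdGaussianAbsMoment p *
        ∫ x, (∫ t, (A x).indicator 1 t / ρ t ∂ν - ν.real (A x) ^ 2) ^ (p / 2) ∂σ)) := by
  have hρ_pos : ∀ᵐ t ∂ν, 0 < ρ t := hlb.mono fun _ ↦ hc₀.trans_le
  have hρ_nonneg : 0 ≤ᵐ[ν] ρ := hρ_pos.mono fun _ ↦ le_of_lt
  have := isProbabilityMeasure_withDensity_ofReal_s6 hρ_nonneg hprob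
  have hA_slice (x : S) : MeasurableSet (A x) := measurable_prodMk_left hA
  have hmean (x : S) : ∫ t, (A x).indicator 1 t / ρ t ∂ν.withDensity (fun t ↦ .ofReal (ρ t)) =
      ν.real (A x) := by
    rw [integral_div_withDensity_ofReal_s6 hρ hρ_pos, integral_indicator_one (hA_slice x)]
  have hlim := tendsto_integral_pi_integral_abs_rpow_sum_sub (ν := σ)
    (μ := ν.withDensity fun t ↦ .ofReal (ρ t)) (g := fun x t ↦ (A x).indicator 1 t / ρ t)
    ((measurable_one.indicator hA).div (hρ.comp measurable_snd))
    (fun x ↦ (withDensity_absolutelyContinuous ν _).ae_le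
      (hlb.mono fun _ ht ↦ indicator_div_mem_Icc hc₀ (A x) ht)) hp
  simp_rw [variance_indicator_div_withDensity_ofReal hρ hc₀ hlb (hA_slice _), hmean] at hlim
  refine hlim.congr fun N ↦ ?_
  simp_rw [← sqrt_mul_discrepancy, ← natCast_rpow_half_mul_abs_rpow, integral_const_mul,
    integral_pi_withDensity_ofReal_s6 hρ hρ_nonneg]

end WeightedDiscrepancy

section UnitCube

variable {ι : Type*} [Fintype ι]

instance isProbabilityMeasure_volume_restrict_Icc_zero_one :
    IsProbabilityMeasure (volume.restrict (Set.Icc (0 : ι → ℝ) 1)) :=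
  ⟨by simp [Real.volume_Icc_pi]⟩

lemma volume_restrict_Icc_pi_s6 {κ : Type*} [Fintype κ] (a b : κ → ι → ℝ) :
    volume.restrict (Set.Icc a b) = Measure.pi fun k ↦ volume.restrict (Set.Icc (a k) (b k)) := by
  rw [← Measure.restrict_pi_pi, Set.pi_univ_Icc, volume_pi]

/-- The points of the anchored box `[0,x)`, encoded without the constraint `0 ≤ t` since it is only
ever measured inside the unit cube. -/
def anchoredBox {ι : Type*} (x : ι → ℝ) : Set (ι → ℝ) := {t | ∀ j, t j < x j}

lemma anchoredBox_inter_Icc_zero_one {ι : Type*} {x : ι → ℝ} (hx : x ≤ 1) :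
    anchoredBox x ∩ Set.Icc 0 1 = Set.univ.pi fun j ↦ Set.Ico 0 (x j) := by
  ext t
  simp only [anchoredBox, Set.mem_inter_iff, Set.mem_ofPred_eq, Set.mem_Icc, Set.mem_univ_pi,
    Set.mem_Ico, forall_and]
  exact ⟨fun ⟨hlt, hnonneg, _⟩ ↦ ⟨hnonneg, hlt⟩,
    fun ⟨hnonneg, hlt⟩ ↦ ⟨hlt, hnonneg, fun j ↦ (hlt j).le.trans (hx j)⟩⟩

lemma measurableSet_mem_anchoredBox {ι : Type*} [Countable ι] :
    MeasurableSet {z : (ι → ℝ) × (ι → ℝ) | z.2 ∈ anchoredBox z.1} := by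
  have hinter : {z : (ι → ℝ) × (ι → ℝ) | z.2 ∈ anchoredBox z.1} = ⋂ j, {z | z.2 j < z.1 j} := by
    ext
    simp [anchoredBox]
  rw [hinter]
  exact .iInter fun j ↦ measurableSet_lt (by fun_prop) (by fun_prop)

lemma volume_restrict_real_anchoredBox {x : ι → ℝ} (hx : x ∈ Set.Icc 0 1) :
    (volume.restrict (Set.Icc (0 : ι → ℝ) 1)).real (anchoredBox x) = ∏ j, x j := by
  rw [measureReal_def, Measure.restrict_apply' measurableSet_Icc,
    anchoredBox_inter_Icc_zero_one hx.2]
  exact (Real.volume_pi_Ico_toReal hx.1).trans (by simp)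

theorem limit_average_Lp_discrepancy_density_general [∀ x t : ι → ℝ, Decidable (∀ j, t j < x j)]
    {p : ℝ} (hp : 0 < p) {ρ : (ι → ℝ) → ℝ} (hmeas : Measurable ρ)
    (hprob : ∫ t in Set.Icc (0 : ι → ℝ) 1, ρ t = 1) {c₀ : ℝ} (hc₀ : 0 < c₀)
    (hlb : ∀ᵐ t ∂volume.restrict (Set.Icc (0 : ι → ℝ) 1), c₀ ≤ ρ t) :
    Tendsto
      (fun N : ℕ ↦ (N : ℝ) ^ (p / 2) *
        ∫ T in Set.Icc (0 : Fin N → ι → ℝ) 1, (∏ k, ρ (T k)) *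
          ∫ x in Set.Icc (0 : ι → ℝ) 1,
            |(∑ k, (1 / (N * ρ (T k))) * (if ∀ j, T k j < x j then (1 : ℝ) else 0))
              - ∏ j, x j| ^ p)
      atTop
      (𝓝 ((2 : ℝ) ^ (p / 2) / √Real.pi * Real.Gamma ((p + 1) / 2) *
        ∫ x in Set.Icc (0 : ι → ℝ) 1,
          ((∫ t in Set.Icc (0 : ι → ℝ) 1, (if ∀ j, t j < x j then (1 : ℝ) else 0) / ρ t)
            - (∏ j, x j) ^ 2) ^ (p / 2))) := by
  have hindicator (x t : ι → ℝ) :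
      (anchoredBox x).indicator 1 t = if ∀ j, t j < x j then (1 : ℝ) else 0 := by
    simp [Set.indicator_apply, anchoredBox]
  have hlim := tendsto_rpow_mul_integral_abs_discrepancy_rpow
    (σ := volume.restrict (Set.Icc (0 : ι → ℝ) 1)) measurableSet_mem_anchoredBox hmeas hprob hc₀
    hlb hp
  have hdisc (N : ℕ) (T : Fin N → ι → ℝ) :
      ∫ x in Set.Icc (0 : ι → ℝ) 1, |discrepancy (volume.restrict (Set.Icc 0 1))
        (fun k ↦ 1 / (N * ρ (T k))) T (anchoredBox x)| ^ p =
      ∫ x in Set.Icc (0 : ι → ℝ) 1,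
        |(∑ k, (1 / (N * ρ (T k))) * (if ∀ j, T k j < x j then (1 : ℝ) else 0)) - ∏ j, x j| ^ p :=
    setIntegral_congr_fun measurableSet_Icc fun x hx ↦ by
      simp only [discrepancy, hindicator, volume_restrict_real_anchoredBox hx]
  have hvar :
      ∫ x in Set.Icc (0 : ι → ℝ) 1, ((∫ t in Set.Icc (0 : ι → ℝ) 1,
        (anchoredBox x).indicator 1 t / ρ t) -
          (volume.restrict (Set.Icc 0 1)).real (anchoredBox x) ^ 2) ^ (p / 2) =
      ∫ x in Set.Icc (0 : ι → ℝ) 1, ((∫ t in Set.Icc (0 : ι → ℝ) 1,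
        (if ∀ j, t j < x j then (1 : ℝ) else 0) / ρ t) - (∏ j, x j) ^ 2) ^ (p / 2) :=
    setIntegral_congr_fun measurableSet_Icc fun x hx ↦ by
      simp only [hindicator, volume_restrict_real_anchoredBox hx]
  rw [hvar] at hlim
  refine hlim.congr fun N ↦ ?_
  simp_rw [hdisc]
  rw [volume_restrict_Icc_pi_s6]
  rfl

end UnitCube

/-- For i.i.d. points drawn from a density `ρd` bounded below on
`[0,1]^d` with weights `a_k = 1/(N ρd(t_k))`,
`N^{p/2} E[∫ |Δ|^p] → (2^{p/2}/√π) Γ((p+1)/2) ∫ (∫ 1_{[0,x)}/ρd - (x₁⋯x_d)²)^{p/2} dx`. -/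
theorem limit_average_Lp_discrepancy_density
    (p : ℝ) (hp : 1 ≤ p) (d : ℕ)
    (ρd : (Fin d → ℝ) → ℝ)
    (hmeas : Measurable ρd)
    (hnonneg : ∀ t, 0 ≤ ρd t)
    (hprob : ∫ t in Set.Icc (0 : Fin d → ℝ) 1, ρd t = 1)
    (c₀ : ℝ) (hc₀ : 0 < c₀)
    (hlb : ∀ᵐ t ∂(volume.restrict (Set.Icc (0 : Fin d → ℝ) 1)), c₀ ≤ ρd t) :
    Tendsto
      (fun N : ℕ =>
        (N : ℝ) ^ (p / 2) *
          ∫ T in Set.Icc (0 : Fin N → Fin d → ℝ) 1,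
            (∏ k, ρd (T k)) *
              ∫ x in Set.Icc (0 : Fin d → ℝ) 1,
                |(∑ k, (1 / (N * ρd (T k))) *
                    (if ∀ j, T k j < x j then (1 : ℝ) else 0)) - ∏ j, x j| ^ p)
      atTop
      (nhds
        ((2 : ℝ) ^ (p / 2) / Real.sqrt Real.pi * Real.Gamma ((p + 1) / 2) *
          ∫ x in Set.Icc (0 : Fin d → ℝ) 1,
            ((∫ t in Set.Icc (0 : Fin d → ℝ) 1,
                (if ∀ j, t j < x j then (1 : ℝ) else 0) / ρd t)
              - (∏ j, x j) ^ 2) ^ (p / 2))) :=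
  limit_average_Lp_discrepancy_density_general (zero_lt_one.trans_le hp) hmeas hprob hc₀ hlb
end

section
/- Let p ∈ [1,∞). For every measurable function ρ : [0,1] → [0,∞] with ∫_0^1 ρ(t) dt = 1 one has ∫_0^1 ( ∫_0^x 1/ρ(t) dt )^{p/2} dx ≥ (1/(p+1)) · ((p+2)/(p+1))^{p/2} (with the convention 1/0 = ∞). -/
open MeasureTheory ENNReal

/-!
Write `F x = ∫_0^x 1/ρ`. For antitone `φ`, the Cauchy–Schwarz inequality and the change of variables
`s = F x`, `ds = dx / ρ x` give `(∫ φ(F))² ≤ ∫ ρ * ∫ φ(F)² / ρ ≤ ∫ ρ * ∫_0^∞ φ(s)² ds`.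
Choosing `φ s = (1 - s ^ q)₊` with `q = p / 2`, and using `F ^ q ≥ 1 - φ(F)`, one obtains
`∫ F ^ q ≥ 1 - √(m c)` with `m = ∫ ρ` and `c = ∫_0^1 (1 - s ^ q)² ds = p² / ((p + 1) (p + 2))`.
The theorem is this bound for the density `ρ` rescaled to have mass `m = (p + 2) / (p + 1)`,
the value for which the resulting lower bound is largest.
-/

section LayerCake

variable {α β : Type*} [MeasurableSpace α] [MeasurableSpace β] {μ : Measure α} {ν : Measure β}

theorem lintegral_eq_lintegral_measure_ofReal_lt {f : α → ℝ≥0∞} (hf : AEMeasurable f μ) :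
    ∫⁻ x, f x ∂μ = ∫⁻ t in Set.Ioi (0 : ℝ), μ {x | ENNReal.ofReal t < f x} := by
  by_cases hfin : ∀ᵐ x ∂μ, f x ≠ ∞
  · calc ∫⁻ x, f x ∂μ = ∫⁻ x, ENNReal.ofReal (f x).toReal ∂μ :=
          lintegral_congr_ae (hfin.mono fun x hx => (ofReal_toReal hx).symm)
      _ = ∫⁻ t in Set.Ioi (0 : ℝ), μ {x | t < (f x).toReal} :=
          lintegral_eq_lintegral_meas_lt μ (.of_forall fun _ => toReal_nonneg) hf.ennreal_toReal
      _ = _ := by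
          refine setLIntegral_congr_fun measurableSet_Ioi fun t ht => measure_congr ?_
          filter_upwards [hfin] with x hx
          exact propext (ofReal_lt_iff_lt_toReal (le_of_lt ht) hx).symm
  · have hpos : μ {x | f x = ∞} ≠ 0 := by simpa [ae_iff] using hfin
    have hright : ∫⁻ t in Set.Ioi (0 : ℝ), μ {x | ENNReal.ofReal t < f x} = ∞ := by
      refine top_unique ?_
      calc ∞ = ∫⁻ _ in Set.Ioi (0 : ℝ), μ {x | f x = ∞} := by simp [hpos]
        _ ≤ _ := lintegral_mono fun t => measure_mono fun x (hx : f x = ∞) =>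
            ofReal_lt_top.trans_eq hx.symm
    rw [hright, lintegral_eq_top_of_measure_eq_top_ne_zero hf hpos]

theorem lintegral_le_lintegral_of_measure_lt_le {f : α → ℝ≥0∞} {g : β → ℝ≥0∞}
    (hf : AEMeasurable f μ) (hg : AEMeasurable g ν)
    (hfg : ∀ t, μ {x | t < f x} ≤ ν {y | t < g y}) :
    ∫⁻ x, f x ∂μ ≤ ∫⁻ y, g y ∂ν := by
  rw [lintegral_eq_lintegral_measure_ofReal_lt hf, lintegral_eq_lintegral_measure_ofReal_lt hg]
  exact lintegral_mono fun t => hfg _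

end LayerCake

section CauchySchwarz

variable {α : Type*} [MeasurableSpace α] {μ : Measure α}

-- Cauchy–Schwarz with `∫ ρ` as a divisor on the left: as a factor on the right it would make the
-- inequality fail for `∫ ρ ∈ {0, ∞}`, because `0 * ∞ = 0`.
theorem sq_lintegral_div_lintegral_le {g ρ : α → ℝ≥0∞} (hg : AEMeasurable g μ)
    (hρ : AEMeasurable ρ μ) :
    (∫⁻ x, g x ∂μ) ^ 2 / ∫⁻ x, ρ x ∂μ ≤ ∫⁻ x, g x ^ 2 / ρ x ∂μ := by
  rcases eq_or_ne (∫⁻ x, ρ x ∂μ) ∞ with hρ_top | hρ_top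
  · simp [hρ_top]
  rcases eq_or_ne (∫⁻ x, g x ^ 2 / ρ x ∂μ) ∞ with hgρ_top | hgρ_top
  · simp [hgρ_top]
  have hgρ : AEMeasurable (fun x => g x ^ 2 / ρ x) μ := (hg.pow_const 2).div hρ
  have hfactor : ∀ᵐ x ∂μ, g x = (g x ^ 2 / ρ x) ^ (1 / 2 : ℝ) * ρ x ^ (1 / 2 : ℝ) := by
    filter_upwards [ae_lt_top' hρ hρ_top, ae_lt_top' hgρ hgρ_top] with x hx hgx
    rw [← mul_rpow_of_nonneg _ _ (by norm_num), ENNReal.div_mul_cancel' _ fun h => absurd h hx.ne,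
      ← rpow_natCast_mul]
    · norm_num
    · intro h
      by_contra hne
      simp [h, ENNReal.div_zero hne] at hgx
  refine ENNReal.div_le_of_le_mul ?_
  calc (∫⁻ x, g x ∂μ) ^ 2
      = (∫⁻ x, (g x ^ 2 / ρ x) ^ (1 / 2 : ℝ) * ρ x ^ (1 / 2 : ℝ) ∂μ) ^ 2 := by
        rw [lintegral_congr_ae hfactor]
    _ ≤ ((∫⁻ x, g x ^ 2 / ρ x ∂μ) ^ (1 / 2 : ℝ) * (∫⁻ x, ρ x ∂μ) ^ (1 / 2 : ℝ)) ^ 2 := by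
        gcongr
        exact lintegral_mul_norm_pow_le hgρ hρ (by norm_num) (by norm_num) (by norm_num)
    _ = (∫⁻ x, g x ^ 2 / ρ x ∂μ) * ∫⁻ x, ρ x ∂μ := by
        rw [← mul_rpow_of_nonneg _ _ (by norm_num), ← rpow_mul_natCast]
        norm_num

end CauchySchwarz

section ChangeOfVariables

theorem volume_restrict_Ioi_setOf_ofReal_le (c : ℝ≥0∞) :
    volume.restrict (Set.Ioi 0) {s : ℝ | ENNReal.ofReal s ≤ c} = c := by
  rcases eq_or_ne c ∞ with rfl | hc
  · simp
  · have hset : {s : ℝ | ENNReal.ofReal s ≤ c} = Set.Iic c.toReal := by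
      ext s
      exact ofReal_le_iff_le_toReal hc
    rw [hset, Measure.restrict_apply measurableSet_Iic, Set.inter_comm, Set.Ioi_inter_Iic,
      Real.volume_Ioc, sub_zero, ofReal_toReal hc]

variable {α : Type*} [LinearOrder α] [TopologicalSpace α] [OrderTopology α]
  [SecondCountableTopology α] [MeasurableSpace α]

theorem measure_le_of_forall_measure_Iio_le {μ : Measure α} [NullSingletonClass μ] {S : Set α}
    {c : ℝ≥0∞} (hS : ∀ x ∈ S, μ (Set.Iio x) ≤ c) : μ S ≤ c := by
  obtain ⟨T, hTS, hT, hTU⟩ :=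
    TopologicalSpace.isOpen_biUnion_countable S Set.Iio fun _ _ => isOpen_Iio
  have hmax : (S \ ⋃ x ∈ S, Set.Iio x).Subsingleton := by
    rintro x ⟨hxS, hx⟩ y ⟨hyS, hy⟩
    simp only [Set.mem_iUnion, Set.mem_Iio, not_exists, not_lt] at hx hy
    exact le_antisymm (hy x hxS) (hx y hyS)
  have hdir : DirectedOn (Function.onFun (· ⊆ ·) Set.Iio) T :=
    directedOn_iff_directed.2 (Monotone.directed_le fun _ _ hxy => Set.Iio_subset_Iio hxy)
  calc μ S ≤ μ (⋃ x ∈ S, Set.Iio x) + μ (S \ ⋃ x ∈ S, Set.Iio x) :=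
        (measure_mono (by simp)).trans (measure_union_le _ _)
    _ = μ (⋃ x ∈ T, Set.Iio x) := by rw [hmax.measure_zero, add_zero, hTU]
    _ = ⨆ x ∈ T, μ (Set.Iio x) := measure_biUnion_eq_iSup hT hdir
    _ ≤ c := iSup₂_le fun x hx => hS x (hTS hx)

theorem lintegral_comp_measure_Iio_le [BorelSpace α] (μ : Measure α) [NullSingletonClass μ]
    {φ : ℝ≥0∞ → ℝ≥0∞} (hφ : Antitone φ) :
    ∫⁻ x, φ (μ (Set.Iio x)) ∂μ ≤ ∫⁻ s in Set.Ioi (0 : ℝ), φ (ENNReal.ofReal s) := by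
  have hmono : Monotone fun x => μ (Set.Iio x) :=
    fun x y hxy => measure_mono (Set.Iio_subset_Iio hxy)
  refine lintegral_le_lintegral_of_measure_lt_le (hφ.comp_monotone hmono).measurable.aemeasurable
    (hφ.comp_monotone ofReal_mono).measurable.aemeasurable fun t => ?_
  refine measure_le_of_forall_measure_Iio_le fun x (hx : t < φ (μ (Set.Iio x))) => ?_
  calc μ (Set.Iio x)
      = volume.restrict (Set.Ioi 0) {s : ℝ | ENNReal.ofReal s ≤ μ (Set.Iio x)} :=
        (volume_restrict_Ioi_setOf_ofReal_le _).symm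
    _ ≤ volume.restrict (Set.Ioi 0) {s : ℝ | t < φ (ENNReal.ofReal s)} :=
        measure_mono fun s hs => hx.trans_le (hφ hs)

end ChangeOfVariables

section CumulativeInv

variable {α : Type*} [LinearOrder α] [MeasurableSpace α]

/-- The function `x ↦ ∫_{t < x} 1/ρ(t) dμ(t)`, whose power `p / 2` is averaged by the
functional `J`. The inverse is that of `ℝ≥0∞`, so `1/0 = ∞` and `1/∞ = 0`. -/
noncomputable def cumulativeInv (μ : Measure α) (ρ : α → ℝ≥0∞) (x : α) : ℝ≥0∞ :=
  ∫⁻ t in Set.Iio x, (ρ t)⁻¹ ∂μ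

variable {μ : Measure α} {ρ : α → ℝ≥0∞}

theorem cumulativeInv_mono : Monotone (cumulativeInv μ ρ) :=
  fun _ _ hxy => lintegral_mono_set (Set.Iio_subset_Iio hxy)

theorem cumulativeInv_const_mul {c : ℝ≥0∞} (hc₀ : c ≠ 0) (hc : c ≠ ∞) (x : α) :
    cumulativeInv μ (fun t => c * ρ t) x = c⁻¹ * cumulativeInv μ ρ x := by
  simp only [cumulativeInv, ENNReal.mul_inv (.inl hc₀) (.inl hc)]
  exact lintegral_const_mul' _ _ (ENNReal.inv_ne_top.2 hc₀)

variable [TopologicalSpace α] [OrderTopology α] [BorelSpace α]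

theorem measurable_cumulativeInv : Measurable (cumulativeInv μ ρ) :=
  cumulativeInv_mono.measurable

theorem withDensity_inv_Iio (x : α) :
    μ.withDensity (fun t => (ρ t)⁻¹) (Set.Iio x) = cumulativeInv μ ρ x :=
  withDensity_apply _ measurableSet_Iio

theorem rpow_mul_lintegral_cumulativeInv_const_mul_rpow {c : ℝ≥0∞} (hc₀ : c ≠ 0) (hc : c ≠ ∞)
    {q : ℝ} (hq : 0 ≤ q) :
    c ^ q * ∫⁻ x, cumulativeInv μ (fun t => c * ρ t) x ^ q ∂μ
      = ∫⁻ x, cumulativeInv μ ρ x ^ q ∂μ := by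
  rw [← lintegral_const_mul _ (measurable_cumulativeInv.pow_const q)]
  simp only [← mul_rpow_of_nonneg _ _ hq, cumulativeInv_const_mul hc₀ hc, ← mul_assoc,
    ENNReal.mul_inv_cancel hc₀ hc, one_mul]

variable [SecondCountableTopology α] [NullSingletonClass μ]

theorem lintegral_comp_cumulativeInv_div_le (hρ : AEMeasurable ρ μ)
    {φ : ℝ≥0∞ → ℝ≥0∞} (hφ : Antitone φ) :
    ∫⁻ x, φ (cumulativeInv μ ρ x) / ρ x ∂μ ≤ ∫⁻ s in Set.Ioi (0 : ℝ), φ (ENNReal.ofReal s) := by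
  have hφF : AEMeasurable (fun x => φ (cumulativeInv μ ρ x)) μ :=
    (hφ.measurable.comp measurable_cumulativeInv).aemeasurable
  calc ∫⁻ x, φ (cumulativeInv μ ρ x) / ρ x ∂μ
      = ∫⁻ x, φ (cumulativeInv μ ρ x) ∂μ.withDensity (fun t => (ρ t)⁻¹) := by
        simp only [ENNReal.div_eq_inv_mul]
        exact (lintegral_withDensity_eq_lintegral_mul₀ hρ.inv hφF).symm
    _ ≤ ∫⁻ s in Set.Ioi (0 : ℝ), φ (ENNReal.ofReal s) := by
        simpa only [withDensity_inv_Iio] using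
          lintegral_comp_measure_Iio_le (μ.withDensity fun t => (ρ t)⁻¹) hφ

theorem sq_lintegral_comp_cumulativeInv_div_le (hρ : AEMeasurable ρ μ)
    {φ : ℝ≥0∞ → ℝ≥0∞} (hφ : Antitone φ) :
    (∫⁻ x, φ (cumulativeInv μ ρ x) ∂μ) ^ 2 / ∫⁻ x, ρ x ∂μ
      ≤ ∫⁻ s in Set.Ioi (0 : ℝ), φ (ENNReal.ofReal s) ^ 2 :=
  (sq_lintegral_div_lintegral_le
    (hφ.measurable.comp measurable_cumulativeInv).aemeasurable hρ).trans
    (lintegral_comp_cumulativeInv_div_le hρ (φ := fun y => φ y ^ 2)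
      fun _ _ hxy => pow_le_pow_left' (hφ hxy) 2)

end CumulativeInv

section PowerProfile

variable {q : ℝ}

theorem antitone_one_sub_rpow (hq : 0 ≤ q) : Antitone fun y : ℝ≥0∞ => 1 - y ^ q :=
  fun _ _ hxy => tsub_le_tsub_left (rpow_le_rpow hxy hq) 1

theorem integral_one_sub_rpow_sq (hq : 0 ≤ q) :
    ∫ s in (0 : ℝ)..1, (1 - s ^ q) ^ 2 = 2 * q ^ 2 / ((q + 1) * (2 * q + 1)) := by
  have hexpand : ∀ s ∈ Set.uIcc (0 : ℝ) 1, (1 - s ^ q) ^ 2 = 1 - 2 * s ^ q + s ^ (q * 2) := by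
    intro s hs
    rw [Set.uIcc_of_le zero_le_one] at hs
    rw [Real.rpow_mul hs.1, Real.rpow_two]
    ring
  have hint : ∀ r : ℝ, 0 ≤ r → IntervalIntegrable (fun s : ℝ => s ^ r) volume 0 1 :=
    fun r hr => intervalIntegral.intervalIntegrable_rpow' (by linarith)
  have hpow : ∀ r : ℝ, 0 ≤ r → ∫ s in (0 : ℝ)..1, s ^ r = 1 / (r + 1) := by
    intro r hr
    rw [integral_rpow (.inl (by linarith)), Real.one_rpow, Real.zero_rpow (by positivity), sub_zero]
  have hintq := (hint q hq).const_mul 2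
  rw [intervalIntegral.integral_congr hexpand,
    intervalIntegral.integral_add (intervalIntegrable_const.sub hintq) (hint _ (by positivity)),
    intervalIntegral.integral_sub intervalIntegrable_const hintq,
    intervalIntegral.integral_const_mul, hpow q hq, hpow (q * 2) (by positivity),
    intervalIntegral.integral_const, smul_eq_mul]
  field_simp
  ring

theorem one_sub_ofReal_rpow_eq_indicator (hq : 0 ≤ q) {s : ℝ} (hs : 0 ≤ s) :
    1 - ENNReal.ofReal s ^ q
      = (Set.Iic 1).indicator (fun s : ℝ => ENNReal.ofReal (1 - s ^ q)) s := by
  rw [ofReal_rpow_of_nonneg hs hq, ← ofReal_one, ← ofReal_sub _ (by positivity)]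
  rcases le_or_gt s 1 with hs1 | hs1
  · rw [Set.indicator_of_mem (Set.mem_Iic.2 hs1)]
  · rw [Set.indicator_of_notMem (by simpa using hs1),
      ofReal_of_nonpos (sub_nonpos.2 (Real.one_le_rpow hs1.le hq))]

theorem lintegral_one_sub_rpow_sq (hq : 0 ≤ q) :
    ∫⁻ s in Set.Ioi (0 : ℝ), (1 - ENNReal.ofReal s ^ q) ^ 2
      = ENNReal.ofReal (2 * q ^ 2 / ((q + 1) * (2 * q + 1))) := by
  have hcont : Continuous fun s : ℝ => (1 - s ^ q) ^ 2 :=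
    (continuous_const.sub (continuous_id.rpow_const fun _ => .inr hq)).pow 2
  have htrunc : ∀ s ∈ Set.Ioi (0 : ℝ), (1 - ENNReal.ofReal s ^ q) ^ 2
      = (Set.Iic 1).indicator (fun s : ℝ => ENNReal.ofReal ((1 - s ^ q) ^ 2)) s := by
    intro s (hs : 0 < s)
    rw [one_sub_ofReal_rpow_eq_indicator hq hs.le]
    by_cases hs1 : s ∈ Set.Iic (1 : ℝ)
    · rw [Set.indicator_of_mem hs1, Set.indicator_of_mem hs1,
        ofReal_pow (sub_nonneg.2 (Real.rpow_le_one hs.le hs1 hq))]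
    · rw [Set.indicator_of_notMem hs1, Set.indicator_of_notMem hs1, zero_pow two_ne_zero]
  rw [setLIntegral_congr_fun measurableSet_Ioi htrunc, setLIntegral_indicator measurableSet_Iic,
    Set.inter_comm, Set.Ioi_inter_Iic,
    ← ofReal_integral_eq_lintegral_ofReal hcont.integrableOn_Ioc (.of_forall fun _ => sq_nonneg _),
    ← intervalIntegral.integral_of_le zero_le_one, integral_one_sub_rpow_sq hq]

end PowerProfile

section LowerBound

variable {α : Type*} [LinearOrder α] [TopologicalSpace α] [OrderTopology α]
  [SecondCountableTopology α] [MeasurableSpace α] [BorelSpace α] {μ : Measure α}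
  [IsProbabilityMeasure μ] [NullSingletonClass μ] {ρ : α → ℝ≥0∞}

theorem one_sub_le_lintegral_cumulativeInv_rpow {q m : ℝ} (hq : 0 ≤ q) (hm : 0 < m)
    (hρ : AEMeasurable ρ μ) (hmass : ∫⁻ x, ρ x ∂μ ≤ ENNReal.ofReal m) :
    1 - ENNReal.ofReal √(m * (2 * q ^ 2 / ((q + 1) * (2 * q + 1))))
      ≤ ∫⁻ x, cumulativeInv μ ρ x ^ q ∂μ := by
  set b := √(m * (2 * q ^ 2 / ((q + 1) * (2 * q + 1))))
  have hsq : (∫⁻ x, (1 - cumulativeInv μ ρ x ^ q) ∂μ) ^ 2 ≤ ENNReal.ofReal b ^ 2 := by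
    calc (∫⁻ x, (1 - cumulativeInv μ ρ x ^ q) ∂μ) ^ 2
        ≤ ENNReal.ofReal m * ENNReal.ofReal (2 * q ^ 2 / ((q + 1) * (2 * q + 1))) := by
          rw [← lintegral_one_sub_rpow_sq hq, mul_comm,
            ← ENNReal.div_le_iff (by simpa using hm) ofReal_ne_top]
          exact (ENNReal.div_le_div_left hmass _).trans
            (sq_lintegral_comp_cumulativeInv_div_le hρ (antitone_one_sub_rpow hq))
      _ = ENNReal.ofReal b ^ 2 := by
          rw [← ofReal_mul hm.le, ← ofReal_pow (Real.sqrt_nonneg _), Real.sq_sqrt (by positivity)]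
  have hdeficit : ∫⁻ x, (1 - cumulativeInv μ ρ x ^ q) ∂μ ≤ ENNReal.ofReal b :=
    (ENNReal.pow_le_pow_left_iff two_ne_zero).1 hsq
  rw [tsub_le_iff_left]
  calc (1 : ℝ≥0∞) = ∫⁻ _, 1 ∂μ := by simp
    _ ≤ ∫⁻ x, ((1 - cumulativeInv μ ρ x ^ q) + cumulativeInv μ ρ x ^ q) ∂μ :=
        lintegral_mono fun _ => le_tsub_add
    _ = (∫⁻ x, (1 - cumulativeInv μ ρ x ^ q) ∂μ) + ∫⁻ x, cumulativeInv μ ρ x ^ q ∂μ :=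
        lintegral_add_right _ (measurable_cumulativeInv.pow_const q)
    _ ≤ ENNReal.ofReal b + ∫⁻ x, cumulativeInv μ ρ x ^ q ∂μ := by gcongr

theorem J_functional_lower_bound_general {p : ℝ} (hp : 0 ≤ p) (hρ : AEMeasurable ρ μ)
    (hmass : ∫⁻ x, ρ x ∂μ ≤ 1) :
    ENNReal.ofReal ((1 / (p + 1)) * ((p + 2) / (p + 1)) ^ (p / 2))
      ≤ ∫⁻ x, (∫⁻ t in Set.Iio x, 1 / ρ t ∂μ) ^ (p / 2) ∂μ := by
  set m := (p + 2) / (p + 1) with hm_def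
  have hq : 0 ≤ p / 2 := by positivity
  have hm : 0 < m := by positivity
  have hsqrt : √(m * (2 * (p / 2) ^ 2 / ((p / 2 + 1) * (2 * (p / 2) + 1)))) = p / (p + 1) := by
    rw [Real.sqrt_eq_iff_mul_self_eq (by positivity) (by positivity), hm_def]
    field_simp
  have hmass_scaled : ∫⁻ x, ENNReal.ofReal m * ρ x ∂μ ≤ ENNReal.ofReal m := by
    rw [lintegral_const_mul'' _ hρ]
    exact mul_le_of_le_one_right' hmass
  have hone_sub : 1 / (p + 1) = 1 - p / (p + 1) := by
    field_simp
    ring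
  simp only [one_div (ρ _), ← cumulativeInv.eq_def]
  calc ENNReal.ofReal (1 / (p + 1) * m ^ (p / 2))
      = ENNReal.ofReal m ^ (p / 2) * (1 - ENNReal.ofReal (p / (p + 1))) := by
        rw [mul_comm, ofReal_mul (by positivity), ofReal_rpow_of_pos hm, hone_sub,
          ofReal_sub _ (by positivity), ofReal_one]
    _ ≤ ENNReal.ofReal m ^ (p / 2)
          * ∫⁻ x, cumulativeInv μ (fun t => ENNReal.ofReal m * ρ t) x ^ (p / 2) ∂μ := by
        gcongr
        simpa only [hsqrt] using
          one_sub_le_lintegral_cumulativeInv_rpow hq hm (hρ.const_mul _) hmass_scaled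
    _ = ∫⁻ x, cumulativeInv μ ρ x ^ (p / 2) ∂μ :=
        rpow_mul_lintegral_cumulativeInv_const_mul_rpow (by simpa using hm) ofReal_ne_top hq

end LowerBound

theorem lintegral_Iio_restrict_Icc {α : Type*} [LinearOrder α] [TopologicalSpace α]
    [OrderClosedTopology α] [MeasurableSpace α] [OpensMeasurableSpace α] (μ : Measure α)
    (f : α → ℝ≥0∞) {a b x : α} (hx : x ≤ b) :
    ∫⁻ t in Set.Iio x, f t ∂μ.restrict (Set.Icc a b) = ∫⁻ t in Set.Ico a x, f t ∂μ := by
  have hset : Set.Iio x ∩ Set.Icc a b = Set.Ico a x := by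
    ext t
    simp only [Set.mem_inter_iff, Set.mem_Iio, Set.mem_Icc, Set.mem_Ico]
    grind
  rw [Measure.restrict_restrict measurableSet_Iio, hset]

/-- For every probability density `ρ` on `[0,1]` one has
`∫_0^1 (∫_0^x 1/ρ(t) dt)^{p/2} dx ≥ (1/(p+1)) ((p+2)/(p+1))^{p/2}`. -/
theorem J_functional_lower_bound
    (p : ℝ) (hp : 1 ≤ p)
    (ρ : ℝ → ℝ≥0∞)
    (hmeas : Measurable ρ)
    (hprob : (∫⁻ t in Set.Icc (0 : ℝ) 1, ρ t) = 1) :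
    ENNReal.ofReal ((1 / (p + 1)) * ((p + 2) / (p + 1)) ^ (p / 2))
      ≤ ∫⁻ x in Set.Icc (0 : ℝ) 1, (∫⁻ t in Set.Ico (0 : ℝ) x, 1 / ρ t) ^ (p / 2) := by
  have : IsProbabilityMeasure (volume.restrict (Set.Icc (0 : ℝ) 1)) := ⟨by simp⟩
  refine (J_functional_lower_bound_general (zero_le_one.trans hp) hmeas.aemeasurable
    hprob.le).trans_eq (setLIntegral_congr_fun measurableSet_Icc fun x hx => ?_)
  simp only [lintegral_Iio_restrict_Icc _ _ hx.2]
end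

section
/- Define ρ*(t) = 1 + 2·cos( (1/3)·arccos(2t−1) + 4π/3 ) for t ∈ [0,1]. Then for every t ∈ [0,1]: ρ*(t)³ − 3·ρ*(t)² + 4(1−t) = 0 (equivalently 4t = (2−ρ*(t))²·(1+ρ*(t))); moreover ρ*(0) = 2, ρ*(1) = 0, 0 ≤ ρ*(t) ≤ 2 for all t ∈ [0,1], and ∫_0^1 ρ*(t) dt = 1. -/
open MeasureTheory Real

/-!
Put `y = 2t - 1`. Since `arccos y = π/2 - arcsin y`, the density is
`ρ*(t) = 1 - 2 sin (arcsin y / 3)`, and `x = 2 sin (arcsin y / 3)` is a root of `x³ - 3x + 2y`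
by the triple-angle formula for the sine. As a function of `y` this root is odd, monotone and equal
to `1` at `y = 1`, which gives the endpoint values and the bounds. Oddness makes `ρ* - 1`
antisymmetric about `t = 1/2`, so `ρ*` has mean `1`.
-/

theorem intervalIntegral_eq_zero_of_comp_add_sub_eq_neg {E : Type*} [NormedAddCommGroup E]
    [NormedSpace ℝ E] {f : ℝ → E} {a b : ℝ} (hf : ∀ x, f (a + b - x) = -f x) :
    ∫ x in a..b, f x = 0 := by
  have : IsAddTorsionFree E := .of_isTorsionFree ℝ E
  refine self_eq_neg.mp ?_
  calc ∫ x in a..b, f x = ∫ x in a..b, f (a + b - x) := by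
        rw [intervalIntegral.integral_comp_sub_left, add_sub_cancel_right, add_sub_cancel_left]
    _ = -∫ x in a..b, f x := by simp only [hf, intervalIntegral.integral_neg]

/-- For `y ∈ [-1, 1]`, the middle one of the three real roots of `x³ - 3x + 2y`, in Viète's
trigonometric form. It is `-1` to the left of this interval and `1` to the right, because `arcsin`
is constant there. -/
noncomputable def middleRoot (y : ℝ) : ℝ := 2 * sin (arcsin y / 3)

theorem middleRoot_cubic {y : ℝ} (hy : y ∈ Set.Icc (-1) 1) :
    middleRoot y ^ 3 - 3 * middleRoot y + 2 * y = 0 := by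
  have triple_angle : y = 3 * sin (arcsin y / 3) - 4 * sin (arcsin y / 3) ^ 3 := by
    rw [← sin_three_mul, mul_div_cancel₀ _ three_ne_zero, sin_arcsin' hy]
  unfold middleRoot
  linear_combination 2 * triple_angle

theorem middleRoot_neg (y : ℝ) : middleRoot (-y) = -middleRoot y := by
  simp only [middleRoot, arcsin_neg, neg_div, sin_neg, mul_neg]

theorem middleRoot_one : middleRoot 1 = 1 := by
  rw [middleRoot, arcsin_one, show π / 2 / 3 = π / 6 by ring, sin_pi_div_six]
  norm_num

theorem middleRoot_neg_one : middleRoot (-1) = -1 := by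
  rw [middleRoot_neg, middleRoot_one]

theorem monotone_middleRoot : Monotone middleRoot := by
  intro x y hxy
  have arcsin_div_three_le : arcsin x / 3 ≤ arcsin y / 3 := by gcongr
  have sin_le : sin (arcsin x / 3) ≤ sin (arcsin y / 3) :=
    sin_le_sin_of_le_of_le_pi_div_two
      (by linarith [neg_pi_div_two_le_arcsin x, pi_pos])
      (by linarith [arcsin_le_pi_div_two y, pi_pos])
      arcsin_div_three_le
  exact mul_le_mul_of_nonneg_left sin_le zero_le_two

theorem middleRoot_mem_Icc {y : ℝ} (hy : y ∈ Set.Icc (-1) 1) : middleRoot y ∈ Set.Icc (-1) 1 := by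
  simpa only [middleRoot_neg_one, middleRoot_one] using monotone_middleRoot.mapsTo_Icc hy

theorem continuous_middleRoot : Continuous middleRoot :=
  continuous_const.mul (continuous_sin.comp (continuous_arcsin.div_const 3))

theorem two_mul_cos_arccos_third_add (y : ℝ) :
    2 * cos (1 / 3 * arccos y + 4 * π / 3) = -middleRoot y := by
  have angle_eq : 1 / 3 * arccos y + 4 * π / 3 = π / 2 - arcsin y / 3 + π := by
    rw [arccos_eq_pi_div_two_sub_arcsin]
    ring
  rw [angle_eq, cos_add_pi, cos_pi_div_two_sub, middleRoot, mul_neg]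

theorem integral_one_sub_middleRoot :
    ∫ t in Set.Icc (0 : ℝ) 1, (1 - middleRoot (2 * t - 1)) = 1 := by
  have integral_middleRoot : ∫ t in (0 : ℝ)..1, middleRoot (2 * t - 1) = 0 :=
    intervalIntegral_eq_zero_of_comp_add_sub_eq_neg fun t ↦ by
      rw [← middleRoot_neg]
      ring_nf
  have continuous_comp : Continuous fun t : ℝ ↦ middleRoot (2 * t - 1) :=
    continuous_middleRoot.comp (by fun_prop)
  rw [integral_Icc_eq_integral_Ioc, ← intervalIntegral.integral_of_le zero_le_one,
    intervalIntegral.integral_sub intervalIntegrable_const (continuous_comp.intervalIntegrable _ _),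
    integral_middleRoot, intervalIntegral.integral_const]
  norm_num

/-- The function `ρ*(t) = 1 + 2cos((1/3)arccos(2t-1) + 4π/3)`
satisfies the cubic `ρ*³ - 3ρ*² + 4(1-t) = 0` (equivalently
`4t = (2-ρ*)²(1+ρ*)`), has `ρ*(0) = 2`, `ρ*(1) = 0`, takes values in `[0,2]`,
and is a probability density on `[0,1]`. -/
theorem optimal_density_p_one_properties
    (ρstar : ℝ → ℝ)
    (hρ : ∀ t, ρstar t = 1 + 2 * Real.cos ((1 / 3) * Real.arccos (2 * t - 1)
        + 4 * Real.pi / 3)) :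
    (∀ t ∈ Set.Icc (0 : ℝ) 1,
        ρstar t ^ 3 - 3 * ρstar t ^ 2 + 4 * (1 - t) = 0) ∧
    (∀ t ∈ Set.Icc (0 : ℝ) 1,
        4 * t = (2 - ρstar t) ^ 2 * (1 + ρstar t)) ∧
    ρstar 0 = 2 ∧
    ρstar 1 = 0 ∧
    (∀ t ∈ Set.Icc (0 : ℝ) 1, 0 ≤ ρstar t ∧ ρstar t ≤ 2) ∧
    (∫ t in Set.Icc (0 : ℝ) 1, ρstar t) = 1 := by
  obtain rfl : ρstar = fun t ↦ 1 - middleRoot (2 * t - 1) := by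
    ext t
    rw [hρ, two_mul_cos_arccos_third_add, ← sub_eq_add_neg]
  have mem_Icc {t : ℝ} (ht : t ∈ Set.Icc 0 1) : 2 * t - 1 ∈ Set.Icc (-1) 1 :=
    ⟨by linarith [ht.1], by linarith [ht.2]⟩
  refine ⟨fun t ht ↦ ?cubic, fun t ht ↦ ?factored, ?at_zero, ?at_one, fun t ht ↦ ?bounds,
    integral_one_sub_middleRoot⟩
  case cubic => linear_combination -middleRoot_cubic (mem_Icc ht)
  case factored => linear_combination middleRoot_cubic (mem_Icc ht)
  case at_zero => norm_num [middleRoot_neg_one]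
  case at_one => norm_num [middleRoot_one]
  case bounds =>
    obtain ⟨neg_one_le, le_one⟩ := middleRoot_mem_Icc (mem_Icc ht)
    constructor <;> linarith
end
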